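/- Assume N ≥ 1, σ > 0, Nσ ≤ 4, m > 0, and u ∈ H²(ℝ^N) is a minimizer of E on {v ∈ H²(ℝ^N) : ‖v‖_{L²}² = m}. Then there exists c = c(u) > 0 such that Δ²u + 2Δu + (1+c)u - |u|^{2σ}u = 0 in H^{-2}(ℝ^N), and 1 + c ∈ [-E'_{min,ℓ}(m), -E'_{min,r}(m)], where E'_{min,ℓ} and E'_{min,r} are the left and right derivatives of the concave function E_min. Moreover: if m₁ < m₂, u₁ minimizes E at mass m₁ and u₂ minimizes E at mass m₂, then c(u₁) < c(u₂); and if m₀ := sup{m > 0 : E_min(m) = -m} is positive, then for every m ∈ (0, m₀) there is no minimizer of E on {v ∈ H²(ℝ^N) : ‖v‖_{L²}² = m}. -/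

import Mathlib

open MeasureTheory Filter Topology

noncomputable section

abbrev Esp (N : ℕ) := EuclideanSpace ℝ (Fin N)

/-- Smooth compactly supported test functions. -/
def TestFun {N : ℕ} (φ : Esp N → ℂ) : Prop :=
  ContDiff ℝ (⊤ : ℕ∞) φ ∧ HasCompactSupport φ

/-- Partial derivative in the `i`-th coordinate direction. -/
def pderivC {N : ℕ} (i : Fin N) (φ : Esp N → ℂ) : Esp N → ℂ :=
  fun x => fderiv ℝ φ x (EuclideanSpace.single i (1 : ℝ))

/-- The Laplacian of a (smooth) function. -/
def lapC {N : ℕ} (φ : Esp N → ℂ) : Esp N → ℂ :=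
  fun x => ∑ i, pderivC i (pderivC i φ) x

/-- `v` is the weak `i`-th partial derivative of `u`. -/
def IsWeakPDeriv {N : ℕ} (u : Esp N → ℂ) (i : Fin N) (v : Esp N → ℂ) : Prop :=
  ∀ φ : Esp N → ℂ, TestFun φ → ∫ x, u x * pderivC i φ x = - ∫ x, v x * φ x

/-- `v` is the weak Laplacian of `u`. -/
def IsWeakLap {N : ℕ} (u v : Esp N → ℂ) : Prop :=
  ∀ φ : Esp N → ℂ, TestFun φ → ∫ x, u x * lapC φ x = ∫ x, v x * φ x

/-- An element of the Sobolev space `H²(ℝ^N, ℂ)`: an `L²` function together with its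
weak partial derivatives and its weak Laplacian, all in `L²`. -/
structure H2 (N : ℕ) where
  u : Esp N → ℂ
  grad : Fin N → Esp N → ℂ
  lapl : Esp N → ℂ
  u_mem : MemLp u 2 (volume : Measure (Esp N))
  grad_mem : ∀ i, MemLp (grad i) 2 (volume : Measure (Esp N))
  lapl_mem : MemLp lapl 2 (volume : Measure (Esp N))
  grad_spec : ∀ i, IsWeakPDeriv u i (grad i)
  lapl_spec : IsWeakLap u lapl

namespace H2

variable {N : ℕ}

/-- `∫ |u|²`. -/
def massSq (U : H2 N) : ℝ := ∫ x, ‖U.u x‖ ^ 2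

/-- `∫ |∇u|²`. -/
def gradSq (U : H2 N) : ℝ := ∑ i, ∫ x, ‖U.grad i x‖ ^ 2

/-- `∫ |Δu|²`. -/
def lapSq (U : H2 N) : ℝ := ∫ x, ‖U.lapl x‖ ^ 2

/-- `∫ |u|^{2σ+2}`. -/
def pPow (σ : ℝ) (U : H2 N) : ℝ := ∫ x, ‖U.u x‖ ^ (2 * σ + 2)

/-- The energy `E(u) = ∫|Δu|² - 2∫|∇u|² - (1/(σ+1))∫|u|^{2σ+2}`. -/
def energy (σ : ℝ) (U : H2 N) : ℝ :=
  U.lapSq - 2 * U.gradSq - (1 / (σ + 1)) * U.pPow σ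

/-- The square of the `H²` norm. -/
def h2NormSq (U : H2 N) : ℝ := U.massSq + U.gradSq + U.lapSq

/-- `u` does not vanish almost everywhere. -/
def Nontriv (U : H2 N) : Prop := ¬ (U.u =ᵐ[(volume : Measure (Esp N))] 0)

end H2

/-- `E_min(m) = inf {E(u) : u ∈ H², ∫|u|² = m}`, with values in `EReal`. -/
def EminE (N : ℕ) (σ m : ℝ) : EReal :=
  ⨅ (U : H2 N) (_ : U.massSq = m), ((U.energy σ : ℝ) : EReal)

/-- The `L^p` norm (as a real number) of a function on `ℝ^N`. -/
def rLp {N : ℕ} (p : ℝ) (f : Esp N → ℂ) : ℝ :=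
  (eLpNorm f (ENNReal.ofReal p) (volume : Measure (Esp N))).toReal


/-- The best constant `B(N,σ)` in the Gagliardo–Nirenberg–Sobolev inequality
`‖u‖_{L^{2σ+2}}^{2σ+2} ≤ B ‖Δu‖_{L²}^{Nσ/2} ‖u‖_{L²}^{2+2σ-Nσ/2}`. -/
def GNconst (N : ℕ) (σ : ℝ) : ℝ :=
  sSup {r : ℝ | ∃ U : H2 N, U.Nontriv ∧
    r = U.pPow σ /
      (rLp 2 U.lapl ^ ((N : ℝ) * σ / 2) * rLp 2 U.u ^ (2 + 2 * σ - (N : ℝ) * σ / 2))}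

/-- `k* = (σ+1)^{1/σ} B(N,σ)^{-1/σ}`. -/
def kstar (N : ℕ) (σ : ℝ) : ℝ := (σ + 1) ^ (1 / σ) * GNconst N σ ^ (-(1 / σ))

/-- Strong `H²` convergence of `v k (· + xs k)` to `U`. -/
def H2TendstoTrans {N : ℕ} (v : ℕ → H2 N) (xs : ℕ → Esp N) (U : H2 N) : Prop :=
  Tendsto (fun k => eLpNorm (fun x => (v k).u (x + xs k) - U.u x) 2
      (volume : Measure (Esp N))) atTop (nhds 0) ∧
  (∀ i, Tendsto (fun k => eLpNorm (fun x => (v k).grad i (x + xs k) - U.grad i x) 2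
      (volume : Measure (Esp N))) atTop (nhds 0)) ∧
  Tendsto (fun k => eLpNorm (fun x => (v k).lapl (x + xs k) - U.lapl x) 2
      (volume : Measure (Esp N))) atTop (nhds 0)

/-- `u` is a weak (`H^{-2}`) solution of `Δ²u + 2Δu + (1+c)u - |u|^{2σ}u = 0`. -/
def SolvesSW {N : ℕ} (σ c : ℝ) (U : H2 N) : Prop :=
  ∀ φ : Esp N → ℂ, TestFun φ →
    (∫ x, U.lapl x * lapC φ x) + 2 * (∫ x, U.lapl x * φ x) +
        ((1 + c : ℝ) : ℂ) * (∫ x, U.u x * φ x) -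
        (∫ x, ((‖U.u x‖ ^ (2 * σ) : ℝ) : ℂ) * U.u x * φ x) = 0

/-- `T_c(u) = ∫|Δu|² - 2∫|∇u|² + (1+c)∫|u|²`. -/
def Tfun {N : ℕ} (c : ℝ) (U : H2 N) : ℝ := U.lapSq - 2 * U.gradSq + (1 + c) * U.massSq

/-- `t(c) = inf {T_c(u) : ∫|u|^{2σ+2} = 1}`. -/
def tmin (N : ℕ) (σ c : ℝ) : ℝ := sInf {r : ℝ | ∃ U : H2 N, U.pPow σ = 1 ∧ r = Tfun c U}

/-- The action `S_c(u) = E(u) + (1+c)‖u‖_{L²}² = T_c(u) - (1/(σ+1))∫|u|^{2σ+2}`. -/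
def action {N : ℕ} (σ c : ℝ) (U : H2 N) : ℝ := U.energy σ + (1 + c) * U.massSq

/-!
The existence of a minimizer at mass `m` bounds the energy from below at that mass, and comparing
with the concentrated functions `x ↦ l^{N/2} u(l x)` turns this bound into a Gagliardo–Nirenberg
inequality; in particular `∫|u|^{2σ+2}` is finite on `H²`.

For `u ≠ 0` put `λ(u) = (∫|u|^{2σ+2} + 2∫|∇u|² - ∫|Δu|²) / ∫|u|²`. Along the multiples of `u` the
energy is a concave function of the mass `t`, strictly so if `∫|u|^{2σ+2} > 0`, and `-λ(u)` is its
slope at `u`, so that `E_min(t) ≤ E(u) - λ(u) (t - ∫|u|²)` for every `t`. This one inequality yields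
* the concavity of `E_min`, and `-λ(u)` as a slope between its one-sided derivatives when `u` is a
  minimizer;
* `λ(u₁) < λ(u₂)` for minimizers of masses `m₁ < m₂`, by using it at both of them;
* the Euler–Lagrange equation with `1 + c = λ(u)`, by using it at `u + s v` and differentiating.

Functions with frequencies near the sphere `2π|ξ| = 1`, on which the symbol
`(2π|ξ|)⁴ - 2(2π|ξ|)² + 1` of `Δ² + 2Δ + 1` vanishes, show `E_min(m) ≤ -m`. As that symbol is
nonnegative, a minimizer has `λ(u) > 1`, and its tangent line then gives `E_min(t) < -t` for all
larger masses `t`.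

If `Nσ = 4`, one also has to know that `E_min` is finite slightly beyond `m`: there
`∫|Δu|² - (1/(σ+1))∫|u|^{2σ+2} ≥ 0` at mass `m` by concentration, and this must hold with a margin,
since otherwise functions of mass `m` would have energies tending to `-∞`.
-/

open scoped FourierTransform SchwartzMap LineDeriv ContDiff

open scoped FourierTransform SchwartzMap LineDeriv ContDiff

section FourierL2

variable {E : Type*} [NormedAddCommGroup E] [InnerProductSpace ℝ E] [FiniteDimensional ℝ E]
  [MeasurableSpace E] [BorelSpace E] {f g : E → ℂ}

/-- The Plancherel–Fourier transform of a square-integrable function, as an element of `L²`. -/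
def fourierL2 (hf : MemLp f 2) : Lp ℂ 2 (volume : Measure E) := 𝓕 (hf.toLp f)

/-- The inverse Plancherel–Fourier transform of a square-integrable function, as an element of
`L²`. -/
def fourierInvL2 (hf : MemLp f 2) : Lp ℂ 2 (volume : Measure E) := 𝓕⁻ (hf.toLp f)

theorem integral_fourierL2_mul (hf : MemLp f 2) (ψ : 𝓢(E, ℂ)) :
    ∫ ξ, fourierL2 hf ξ * ψ ξ = ∫ x, f x * (𝓕 ψ : 𝓢(E, ℂ)) x := by
  have h := congrArg (· ψ) (Lp.fourier_toTemperedDistribution_eq (hf.toLp f))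
  simp only [TemperedDistribution.fourier_apply, Lp.toTemperedDistribution_apply,
    smul_eq_mul] at h
  calc ∫ ξ, fourierL2 hf ξ * ψ ξ = ∫ ξ, ψ ξ * fourierL2 hf ξ := by simp only [mul_comm]
    _ = ∫ x, (𝓕 ψ : 𝓢(E, ℂ)) x * hf.toLp f x := h.symm
    _ = ∫ x, f x * (𝓕 ψ : 𝓢(E, ℂ)) x := integral_congr_ae <| by
      filter_upwards [hf.coeFn_toLp] with x hx
      rw [hx, mul_comm]

theorem integral_fourierInvL2_mul (hf : MemLp f 2) (ψ : 𝓢(E, ℂ)) :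
    ∫ x, fourierInvL2 hf x * ψ x = ∫ ξ, f ξ * (𝓕⁻ ψ : 𝓢(E, ℂ)) ξ := by
  have h := congrArg (· ψ) (Lp.fourierInv_toTemperedDistribution_eq (hf.toLp f))
  simp only [TemperedDistribution.fourierInv_apply, Lp.toTemperedDistribution_apply,
    smul_eq_mul] at h
  calc ∫ x, fourierInvL2 hf x * ψ x = ∫ x, ψ x * fourierInvL2 hf x := by simp only [mul_comm]
    _ = ∫ ξ, (𝓕⁻ ψ : 𝓢(E, ℂ)) ξ * hf.toLp f ξ := h.symm
    _ = ∫ ξ, f ξ * (𝓕⁻ ψ : 𝓢(E, ℂ)) ξ := integral_congr_ae <| by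
      filter_upwards [hf.coeFn_toLp] with x hx
      rw [hx, mul_comm]

theorem integral_norm_sq_fourierL2 (hf : MemLp f 2) :
    ∫ ξ, ‖fourierL2 hf ξ‖ ^ 2 = ∫ x, ‖f x‖ ^ 2 := by
  have h := Lp.inner_fourier_eq (hf.toLp f) (hf.toLp f)
  rw [L2.inner_def, L2.inner_def] at h
  simp only [inner_self_eq_norm_sq_to_K] at h
  calc ∫ ξ, ‖fourierL2 hf ξ‖ ^ 2 = ∫ x, ‖hf.toLp f x‖ ^ 2 := by exact_mod_cast h
    _ = ∫ x, ‖f x‖ ^ 2 := integral_congr_ae <| by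
      filter_upwards [hf.coeFn_toLp] with x hx
      rw [hx]

theorem fourierL2_fourierInvL2 (hf : MemLp f 2) (h : MemLp (fourierInvL2 hf) 2) :
    fourierL2 h =ᵐ[volume] f := by
  have : fourierL2 h = hf.toLp f := by
    rw [fourierL2, Lp.toLp_coeFn, fourierInvL2, FourierTransform.fourier_fourierInv_eq]
  exact this ▸ hf.coeFn_toLp

theorem ae_eq_of_integral_mul_schwartzMap_eq (hf : LocallyIntegrable f) (hg : LocallyIntegrable g)
    (h : ∀ ψ : 𝓢(E, ℂ), HasCompactSupport ψ → ∫ x, f x * ψ x = ∫ x, g x * ψ x) :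
    f =ᵐ[volume] g := by
  refine ae_eq_of_integral_contDiff_smul_eq hf hg fun χ hχ hχc => ?_
  have hcpt : HasCompactSupport (fun x => (χ x : ℂ)) :=
    hχc.comp_left (g := Complex.ofReal) Complex.ofReal_zero
  simp only [Complex.real_smul, mul_comm (χ _ : ℂ)]
  exact h (hcpt.toSchwartzMap (Complex.ofRealCLM.contDiff.comp hχ)) hcpt

theorem norm_fourierInvL2_le_integral_norm (hf : MemLp f 2) (hi : Integrable f) :
    ∀ᵐ x, ‖fourierInvL2 hf x‖ ≤ ∫ ξ, ‖f ξ‖ := by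
  set L : E →ₗ[ℝ] E →ₗ[ℝ] ℝ := -innerₗ E with hLdef
  have hL : Continuous fun p : E × E => L p.1 p.2 := by
    simp only [hLdef, LinearMap.neg_apply, innerₗ_apply_apply]
    fun_prop
  set G : E → ℂ := VectorFourier.fourierIntegral Real.fourierChar volume L f
  have hG : Continuous G :=
    VectorFourier.fourierIntegral_continuous Real.continuous_fourierChar hL hi
  have hae : fourierInvL2 hf =ᵐ[volume] G := by
    refine ae_eq_of_integral_mul_schwartzMap_eq ((Lp.memLp _).locallyIntegrable (by norm_num))
      hG.locallyIntegrable fun ψ _ => ?_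
    have hψ : ⇑(𝓕⁻ ψ : 𝓢(E, ℂ)) =
        VectorFourier.fourierIntegral Real.fourierChar volume L.flip ψ := by
      ext x
      simp [hLdef, SchwartzMap.fourierInv_coe, Real.fourierInv_eq, VectorFourier.fourierIntegral,
        real_inner_comm]
    rw [integral_fourierInvL2_mul, hψ]
    exact (VectorFourier.integral_fourierIntegral_smul_eq_flip Real.continuous_fourierChar hL hi
      (ψ.integrable (μ := volume))).symm
  filter_upwards [hae] with x hx
  exact hx ▸ VectorFourier.norm_fourierIntegral_le_integral_norm _ _ _ _ _

end FourierL2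

section Cutoff

variable {E : Type*} [NormedAddCommGroup E] [NormedSpace ℝ E] [FiniteDimensional ℝ E]

/-- A smooth bump function equal to `1` on the unit ball around the origin, used to truncate
Schwartz functions. -/
def unitBump (E : Type*) [NormedAddCommGroup E] : ContDiffBump (0 : E) :=
  ⟨1, 2, one_pos, one_lt_two⟩

/-- The Schwartz function `ψ` cut off smoothly at distance of order `n + 1` from the origin. -/
def schwartzCutoff (ψ : 𝓢(E, ℂ)) (n : ℕ) (x : E) : ℂ :=
  unitBump E ((n + 1 : ℝ)⁻¹ • x) • ψ x

theorem contDiff_schwartzCutoff (ψ : 𝓢(E, ℂ)) (n : ℕ) : ContDiff ℝ ∞ (schwartzCutoff ψ n) :=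
  ((unitBump E).contDiff.comp (contDiff_const_smul _)).smul (ψ.smooth _)

theorem hasCompactSupport_schwartzCutoff (ψ : 𝓢(E, ℂ)) (n : ℕ) :
    HasCompactSupport (schwartzCutoff ψ n) :=
  HasCompactSupport.smul_right (f := fun x => unitBump E ((n + 1 : ℝ)⁻¹ • x))
    ((unitBump E).hasCompactSupport.comp_smul (by positivity))

theorem eventually_schwartzCutoff_eventuallyEq (ψ : 𝓢(E, ℂ)) (x : E) :
    ∀ᶠ n : ℕ in atTop, schwartzCutoff ψ n =ᶠ[𝓝 x] ψ := by
  obtain ⟨k, hk⟩ := exists_nat_gt ‖x‖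
  filter_upwards [eventually_ge_atTop k] with n hn
  have hxn : ‖x‖ < n + 1 := hk.trans (by exact_mod_cast Nat.lt_succ_of_le hn)
  filter_upwards [continuous_norm.tendsto x |>.eventually_lt_const hxn] with y hy
  have hone : unitBump E ((n + 1 : ℝ)⁻¹ • y) = 1 := by
    refine (unitBump E).one_of_mem_closedBall (mem_closedBall_zero_iff.2 ?_)
    rw [norm_smul, norm_inv, Real.norm_of_nonneg (by positivity), inv_mul_le_iff₀ (by positivity)]
    simpa [unitBump] using hy.le
  simp [schwartzCutoff, hone]

theorem norm_unitBump_le_one (x : E) : ‖unitBump E x‖ ≤ 1 := by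
  rw [Real.norm_of_nonneg (unitBump E).nonneg]
  exact (unitBump E).le_one

theorem norm_schwartzCutoff_le (ψ : 𝓢(E, ℂ)) (n : ℕ) (x : E) :
    ‖schwartzCutoff ψ n x‖ ≤ ‖ψ x‖ := by
  rw [schwartzCutoff, norm_smul]
  exact mul_le_of_le_one_left (norm_nonneg _) (norm_unitBump_le_one _)

theorem exists_norm_fderiv_schwartzCutoff_le (E : Type*) [NormedAddCommGroup E] [NormedSpace ℝ E]
    [FiniteDimensional ℝ E] : ∃ C, ∀ (ψ : 𝓢(E, ℂ)) (n : ℕ) (x : E),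
      ‖fderiv ℝ (schwartzCutoff ψ n) x‖ ≤ C * ‖ψ x‖ + ‖fderiv ℝ ψ x‖ := by
  have hχ : ContDiff ℝ 1 (unitBump E) := (unitBump E).contDiff
  obtain ⟨C, hC⟩ := ((unitBump E).hasCompactSupport.fderiv (𝕜 := ℝ)).exists_bound_of_continuous
    (hχ.continuous_fderiv one_ne_zero)
  refine ⟨C, fun ψ n x => ?_⟩
  set a : ℝ := (n + 1 : ℝ)⁻¹ with ha
  have ha1 : ‖a‖ ≤ 1 := by
    rw [ha, norm_inv, Real.norm_of_nonneg (by positivity)]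
    exact inv_le_one_of_one_le₀ (by simp)
  have hχa : ‖fderiv ℝ (fun y => unitBump E (a • y)) x‖ ≤ C := by
    rw [fderiv_comp_smul, norm_smul]
    exact (mul_le_of_le_one_left (norm_nonneg _) ha1).trans (hC _)
  have hdiff : DifferentiableAt ℝ (fun y => unitBump E (a • y)) x :=
    (hχ.comp (contDiff_const_smul a)).differentiable one_ne_zero x
  calc ‖fderiv ℝ (schwartzCutoff ψ n) x‖
      = ‖unitBump E (a • x) • fderiv ℝ ψ x
          + (fderiv ℝ (fun y => unitBump E (a • y)) x).smulRight (ψ x)‖ :=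
        congrArg norm (fderiv_fun_smul hdiff ψ.differentiableAt)
    _ ≤ 1 * ‖fderiv ℝ ψ x‖ + C * ‖ψ x‖ := by
        refine (norm_add_le _ _).trans ?_
        rw [norm_smul, ContinuousLinearMap.norm_smulRight_apply]
        gcongr
        exact norm_unitBump_le_one _
    _ = C * ‖ψ x‖ + ‖fderiv ℝ ψ x‖ := by ring

variable [MeasurableSpace E] [BorelSpace E] {μ : Measure E} [μ.HasTemperateGrowth] {f : E → ℂ}

theorem tendsto_integral_mul_schwartzCutoff (hf : MemLp f 2 μ) (ψ : 𝓢(E, ℂ)) :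
    Tendsto (fun n => ∫ x, f x * schwartzCutoff ψ n x ∂μ) atTop (𝓝 (∫ x, f x * ψ x ∂μ)) := by
  refine tendsto_integral_of_dominated_convergence (fun x => ‖f x‖ * ‖ψ x‖)
    (fun n => hf.aestronglyMeasurable.mul
      (contDiff_schwartzCutoff ψ n).continuous.aestronglyMeasurable)
    (hf.norm.integrable_mul (ψ.memLp 2 μ).norm) (fun n => ae_of_all _ fun x => ?_)
    (ae_of_all _ fun x => tendsto_const_nhds.congr' ?_)
  · rw [norm_mul]
    gcongr
    exact norm_schwartzCutoff_le ψ n x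
  · filter_upwards [eventually_schwartzCutoff_eventuallyEq ψ x] with n hn
    rw [hn.eq_of_nhds]

theorem tendsto_integral_mul_fderiv_schwartzCutoff (hf : MemLp f 2 μ) (ψ : 𝓢(E, ℂ)) (v : E) :
    Tendsto (fun n => ∫ x, f x * fderiv ℝ (schwartzCutoff ψ n) x v ∂μ) atTop
      (𝓝 (∫ x, f x * fderiv ℝ ψ x v ∂μ)) := by
  obtain ⟨C, hC⟩ := exists_norm_fderiv_schwartzCutoff_le E
  have hbound : MemLp (fun x => (C * ‖ψ x‖ + ‖fderiv ℝ ψ x‖) * ‖v‖) 2 μ :=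
    (((ψ.memLp 2 μ).norm.const_mul C).add
      ((SchwartzMap.fderivCLM ℝ E ℂ ψ).memLp 2 μ).norm).mul_const ‖v‖
  refine tendsto_integral_of_dominated_convergence
    (fun x => ‖f x‖ * ((C * ‖ψ x‖ + ‖fderiv ℝ ψ x‖) * ‖v‖)) (fun n => ?_)
    (hf.norm.integrable_mul hbound) (fun n => ae_of_all _ fun x => ?_)
    (ae_of_all _ fun x => tendsto_const_nhds.congr' ?_)
  · exact hf.aestronglyMeasurable.mul (((contDiff_schwartzCutoff ψ n).continuous_fderiv
      (by simp)).clm_apply continuous_const).aestronglyMeasurable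
  · rw [norm_mul]
    gcongr
    exact (ContinuousLinearMap.le_opNorm _ v).trans (by gcongr; exact hC ψ n x)
  · filter_upwards [eventually_schwartzCutoff_eventuallyEq ψ x] with n hn
    rw [hn.fderiv_eq]

end Cutoff

section TestFunctions

variable {N : ℕ} {φ ψ : Esp N → ℂ}

theorem TestFun.memLp (h : TestFun φ) (p : ENNReal) : MemLp φ p :=
  h.1.continuous.memLp_of_hasCompactSupport h.2

theorem TestFun.differentiable (h : TestFun φ) : Differentiable ℝ φ :=
  h.1.differentiable (by simp)

protected theorem TestFun.pderivC (i : Fin N) (h : TestFun φ) : TestFun (pderivC i φ) :=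
  ⟨(h.1.fderiv_right (by simp)).clm_apply contDiff_const,
    (h.2.fderiv (𝕜 := ℝ)).comp_left (g := fun L : Esp N →L[ℝ] ℂ => L (EuclideanSpace.single i 1))
      (zero_apply _)⟩

protected theorem TestFun.lapC (h : TestFun φ) : TestFun (lapC φ) := by
  have hsum : lapC φ = ∑ i, pderivC i (pderivC i φ) := by
    ext x
    simp [lapC]
  refine ⟨ContDiff.sum fun i _ => ((h.pderivC i).pderivC i).1, hsum ▸ ?_⟩
  exact Finset.sum_induction _ HasCompactSupport (fun _ _ => HasCompactSupport.add)
    HasCompactSupport.zero fun i _ => ((h.pderivC i).pderivC i).2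

theorem TestFun.comp_smul (h : TestFun φ) {a : ℝ} (ha : a ≠ 0) : TestFun fun x => φ (a • x) :=
  ⟨h.1.comp (contDiff_const_smul a), h.2.comp_smul ha⟩

theorem TestFun.const_mul (h : TestFun φ) (a : ℂ) : TestFun fun x => a * φ x :=
  ⟨contDiff_const.mul h.1, h.2.mul_left⟩

theorem TestFun.conj (h : TestFun φ) : TestFun fun x => starRingEnd ℂ (φ x) :=
  ⟨Complex.conjCLE.contDiff.comp h.1, h.2.comp_left (map_zero _)⟩

theorem pderivC_const_mul (i : Fin N) (a : ℂ) (φ : Esp N → ℂ) :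
    pderivC i (fun x => a * φ x) = fun x => a * pderivC i φ x := by
  ext x
  exact DFunLike.congr_fun (congrFun (fderiv_const_smul_field a (f := φ)) x) _

theorem pderivC_comp_smul (i : Fin N) (a : ℝ) (φ : Esp N → ℂ) :
    pderivC i (fun x => φ (a • x)) = fun x => (a : ℂ) * pderivC i φ (a • x) := by
  ext x
  simp only [pderivC, fderiv_comp_smul, smul_apply, Complex.real_smul]

theorem pderivC_conj (i : Fin N) (φ : Esp N → ℂ) :
    pderivC i (fun x => starRingEnd ℂ (φ x)) = fun x => starRingEnd ℂ (pderivC i φ x) := by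
  ext x
  exact DFunLike.congr_fun (Complex.conjCLE.comp_fderiv (f := φ) (x := x)) _

theorem lapC_const_mul (a : ℂ) (φ : Esp N → ℂ) :
    lapC (fun x => a * φ x) = fun x => a * lapC φ x := by
  ext x
  simp only [lapC, pderivC_const_mul, Finset.mul_sum]

theorem lapC_comp_smul (a : ℝ) (φ : Esp N → ℂ) :
    lapC (fun x => φ (a • x)) = fun x => (a : ℂ) ^ 2 * lapC φ (a • x) := by
  ext x
  simp only [lapC, pderivC_comp_smul, pderivC_const_mul, Finset.mul_sum, sq, mul_assoc]

theorem lapC_conj (φ : Esp N → ℂ) :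
    lapC (fun x => starRingEnd ℂ (φ x)) = fun x => starRingEnd ℂ (lapC φ x) := by
  ext x
  simp only [lapC, pderivC_conj, map_sum]

theorem TestFun.isWeakPDeriv (h : TestFun φ) (i : Fin N) : IsWeakPDeriv φ i (pderivC i φ) :=
  fun _ hψ => integral_mul_fderiv_eq_neg_fderiv_mul_of_integrable
    (((h.pderivC i).memLp 2).integrable_mul (hψ.memLp 2))
    ((h.memLp 2).integrable_mul ((hψ.pderivC i).memLp 2))
    ((h.memLp 2).integrable_mul (hψ.memLp 2))
    (fun x _ => h.differentiable x) fun x _ => hψ.differentiable x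

theorem integral_mul_lapC {f : Esp N → ℂ} (hf : MemLp f 2) (hφ : TestFun φ) :
    ∫ x, f x * lapC φ x = ∑ i, ∫ x, f x * pderivC i (pderivC i φ) x := by
  simp only [lapC, Finset.mul_sum]
  exact integral_finsetSum _ fun i _ =>
    hf.integrable_mul (((hφ.pderivC i).pderivC i).memLp 2)

theorem TestFun.isWeakLap (h : TestFun φ) : IsWeakLap φ (lapC φ) := fun _ hψ => by
  rw [integral_mul_lapC (h.memLp 2) hψ]
  simp only [mul_comm (lapC φ _)]
  rw [integral_mul_lapC (hψ.memLp 2) h]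
  refine Finset.sum_congr rfl fun i _ => ?_
  rw [h.isWeakPDeriv i _ (hψ.pderivC i), hψ.isWeakPDeriv i _ (h.pderivC i)]
  simp only [mul_comm]

end TestFunctions

section WeakDivergence

variable {N : ℕ}

/-- The Fourier symbol `2πi ξᵢ` of the partial derivative `∂ᵢ`. -/
def pderivSymbol (i : Fin N) (ξ : Esp N) : ℂ := 2 * Real.pi * Complex.I * ξ i

/-- The Fourier symbol `4π²|ξ|²` of `-Δ`. -/
def lapSymbol (ξ : Esp N) : ℝ := 4 * Real.pi ^ 2 * ‖ξ‖ ^ 2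

/-- `v` is the weak divergence of the vector field `w`, restricted to the components in `s`: a
singleton `s` gives weak partial derivatives and `s = univ` the Laplacian as `div ∘ ∇`. -/
def IsWeakDiv (s : Finset (Fin N)) (w : Fin N → Esp N → ℂ) (v : Esp N → ℂ) : Prop :=
  ∀ φ, TestFun φ → ∑ i ∈ s, ∫ x, w i x * pderivC i φ x = -∫ x, v x * φ x

/-- Multiplication of Schwartz functions by the symbol of `∂ᵢ`. -/
def pderivSymbolMul (i : Fin N) (ψ : 𝓢(Esp N, ℂ)) : 𝓢(Esp N, ℂ) :=
  (2 * Real.pi * Complex.I) •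
    SchwartzMap.smulLeftCLM ℂ (inner ℝ · (EuclideanSpace.single i (1 : ℝ))) ψ

theorem pderivSymbolMul_apply (i : Fin N) (ψ : 𝓢(Esp N, ℂ)) (ξ : Esp N) :
    pderivSymbolMul i ψ ξ = pderivSymbol i ξ * ψ ξ := by
  have htg : (inner ℝ · (EuclideanSpace.single i (1 : ℝ)) : Esp N → ℝ).HasTemperateGrowth := by
    fun_prop
  rw [pderivSymbolMul, smul_apply, SchwartzMap.smulLeftCLM_apply_apply htg]
  simp [pderivSymbol, EuclideanSpace.inner_single_right, mul_assoc]

theorem coe_lineDerivOp_single (i : Fin N) (ψ : 𝓢(Esp N, ℂ)) :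
    ⇑(∂_{EuclideanSpace.single i (1 : ℝ)} ψ : 𝓢(Esp N, ℂ)) = pderivC i ψ :=
  funext fun _ => SchwartzMap.lineDerivOp_apply_eq_fderiv ..

theorem pderivC_fourier (i : Fin N) (ψ : 𝓢(Esp N, ℂ)) :
    pderivC i (𝓕 ψ : 𝓢(Esp N, ℂ)) = ⇑(𝓕 (-pderivSymbolMul i ψ) : 𝓢(Esp N, ℂ)) := by
  rw [← coe_lineDerivOp_single, SchwartzMap.lineDerivOp_fourier_eq, neg_smul]
  rfl

theorem fourierInv_lineDerivOp_single (i : Fin N) (ψ : 𝓢(Esp N, ℂ)) :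
    𝓕⁻ (∂_{EuclideanSpace.single i (1 : ℝ)} ψ : 𝓢(Esp N, ℂ)) = -pderivSymbolMul i (𝓕⁻ ψ) := by
  rw [SchwartzMap.fourierInv_lineDerivOp_eq, neg_smul]
  rfl

@[fun_prop]
theorem continuous_pderivSymbol (i : Fin N) : Continuous (pderivSymbol (N := N) i) := by
  unfold pderivSymbol
  fun_prop

theorem continuous_lapSymbol : Continuous (lapSymbol (N := N)) := by
  unfold lapSymbol
  fun_prop

theorem lapSymbol_nonneg (ξ : Esp N) : 0 ≤ lapSymbol ξ := by
  unfold lapSymbol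
  positivity

theorem sum_pderivSymbol_sq (ξ : Esp N) : ∑ i, pderivSymbol i ξ ^ 2 = -(lapSymbol ξ : ℂ) := by
  simp only [pderivSymbol, lapSymbol, mul_pow, Complex.I_sq, ← Finset.mul_sum,
    EuclideanSpace.real_norm_sq_eq]
  push_cast
  ring

theorem sum_norm_pderivSymbol_sq (ξ : Esp N) : ∑ i, ‖pderivSymbol i ξ‖ ^ 2 = lapSymbol ξ := by
  simp only [pderivSymbol, lapSymbol, norm_mul, Complex.norm_real, Complex.norm_I,
    Complex.norm_ofNat, mul_pow, Real.norm_eq_abs, sq_abs, EuclideanSpace.real_norm_sq_eq,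
    ← Finset.mul_sum]
  ring

theorem norm_pderivSymbol_sq_le (i : Fin N) (ξ : Esp N) :
    ‖pderivSymbol i ξ‖ ^ 2 ≤ lapSymbol ξ := by
  rw [← sum_norm_pderivSymbol_sq]
  exact Finset.single_le_sum (f := fun j => ‖pderivSymbol j ξ‖ ^ 2) (fun _ _ => by positivity)
    (Finset.mem_univ i)

variable {s : Finset (Fin N)} {w : Fin N → Esp N → ℂ} {v : Esp N → ℂ}

theorem IsWeakDiv.sum_integral_mul_pderivC_schwartzMap (h : IsWeakDiv s w v)
    (hw : ∀ i, MemLp (w i) 2) (hv : MemLp v 2) (ψ : 𝓢(Esp N, ℂ)) :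
    ∑ i ∈ s, ∫ x, w i x * pderivC i ψ x = -∫ x, v x * ψ x := by
  have hlhs : Tendsto (fun n => ∑ i ∈ s, ∫ x, w i x * pderivC i (schwartzCutoff ψ n) x) atTop
      (𝓝 (∑ i ∈ s, ∫ x, w i x * pderivC i ψ x)) :=
    tendsto_finsetSum _ fun i _ => tendsto_integral_mul_fderiv_schwartzCutoff (hw i) ψ _
  refine tendsto_nhds_unique (hlhs.congr fun n => ?_)
    (tendsto_integral_mul_schwartzCutoff hv ψ).neg
  exact h _ ⟨contDiff_schwartzCutoff ψ n, hasCompactSupport_schwartzCutoff ψ n⟩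

theorem IsWeakDiv.fourierL2_eq (h : IsWeakDiv s w v) (hw : ∀ i, MemLp (w i) 2)
    (hv : MemLp v 2) :
    fourierL2 hv =ᵐ[volume] fun ξ => ∑ i ∈ s, pderivSymbol i ξ * fourierL2 (hw i) ξ := by
  have hloc : ∀ f : Lp ℂ 2 (volume : Measure (Esp N)), LocallyIntegrable f :=
    fun f => (Lp.memLp f).locallyIntegrable (by norm_num)
  have hsum : LocallyIntegrable fun ξ => ∑ i ∈ s, pderivSymbol i ξ * fourierL2 (hw i) ξ :=
    locallyIntegrable_finsetSum (f := fun i ξ => pderivSymbol i ξ * fourierL2 (hw i) ξ) s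
      fun i _ => locallyIntegrableOn_univ.1 ((locallyIntegrableOn_univ.2 (hloc _)).continuousOn_mul
        (continuous_pderivSymbol i).continuousOn isOpen_univ.isLocallyClosed)
  refine ae_eq_of_integral_mul_schwartzMap_eq (hloc _) hsum fun ψ _ => ?_
  have hint (i : Fin N) : Integrable fun ξ => fourierL2 (hw i) ξ * pderivSymbolMul i ψ ξ :=
    (Lp.memLp (fourierL2 (hw i))).integrable_mul ((pderivSymbolMul i ψ).memLp 2)
  calc ∫ ξ, fourierL2 hv ξ * ψ ξ
      = -∑ i ∈ s, ∫ x, w i x * pderivC i (𝓕 ψ : 𝓢(Esp N, ℂ)) x := by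
        rw [h.sum_integral_mul_pderivC_schwartzMap hw hv, neg_neg, integral_fourierL2_mul]
    _ = ∑ i ∈ s, ∫ ξ, fourierL2 (hw i) ξ * pderivSymbolMul i ψ ξ := by
        rw [← Finset.sum_neg_distrib]
        refine Finset.sum_congr rfl fun i _ => ?_
        simp only [pderivC_fourier, ← integral_fourierL2_mul (hw i), neg_apply, mul_neg,
          integral_neg, neg_neg]
    _ = ∫ ξ, ∑ i ∈ s, fourierL2 (hw i) ξ * pderivSymbolMul i ψ ξ :=
        (integral_finsetSum _ fun i _ => hint i).symm
    _ = ∫ ξ, (∑ i ∈ s, pderivSymbol i ξ * fourierL2 (hw i) ξ) * ψ ξ := by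
        refine integral_congr_ae (ae_of_all _ fun ξ => ?_)
        simp only [pderivSymbolMul_apply, Finset.sum_mul]
        exact Finset.sum_congr rfl fun i _ => by ring

theorem isWeakPDeriv_fourierInvL2 {f : Esp N → ℂ} (i : Fin N) (hf : MemLp f 2)
    (hs : MemLp (fun ξ => pderivSymbol i ξ * f ξ) 2) :
    IsWeakPDeriv (fourierInvL2 hf) i (fourierInvL2 hs) := fun φ hφ => by
  let ψ : 𝓢(Esp N, ℂ) := hφ.2.toSchwartzMap hφ.1
  change ∫ x, fourierInvL2 hf x * pderivC i ψ x = -∫ x, fourierInvL2 hs x * ψ x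
  rw [← coe_lineDerivOp_single, integral_fourierInvL2_mul, integral_fourierInvL2_mul,
    fourierInv_lineDerivOp_single, ← integral_neg]
  congr! 2 with ξ
  rw [neg_apply, pderivSymbolMul_apply]
  ring

theorem isWeakLap_fourierInvL2 {f : Esp N → ℂ} (hf : MemLp f 2)
    (hs : MemLp (fun ξ => -(lapSymbol ξ : ℂ) * f ξ) 2) :
    IsWeakLap (fourierInvL2 hf) (fourierInvL2 hs) := fun φ hφ => by
  let ψ : 𝓢(Esp N, ℂ) := hφ.2.toSchwartzMap hφ.1
  let d (i : Fin N) : 𝓢(Esp N, ℂ) → 𝓢(Esp N, ℂ) := (∂_{EuclideanSpace.single i (1 : ℝ)} ·)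
  have hcoe : lapC φ = ⇑(∑ i, d i (d i ψ)) := by
    ext x
    rw [sum_apply]
    simp only [d, coe_lineDerivOp_single, lapC]
    rfl
  have hinv : ∀ ξ, (𝓕⁻ (∑ i, d i (d i ψ)) : 𝓢(Esp N, ℂ)) ξ =
      -(lapSymbol ξ : ℂ) * (𝓕⁻ ψ : 𝓢(Esp N, ℂ)) ξ := fun ξ => by
    simp only [d, FourierTransform.fourierInv_sum, sum_apply, fourierInv_lineDerivOp_single,
      neg_apply, pderivSymbolMul_apply, mul_neg, neg_neg, ← mul_assoc, ← sq, ← Finset.sum_mul,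
      sum_pderivSymbol_sq]
  change ∫ x, fourierInvL2 hf x * lapC φ x = ∫ x, fourierInvL2 hs x * ψ x
  rw [hcoe, integral_fourierInvL2_mul, integral_fourierInvL2_mul]
  congr! 2 with ξ
  rw [hinv]
  ring

end WeakDivergence

section FrequencySupport

variable {N : ℕ}

theorem isBounded_setOf_lapSymbol_le (r : ℝ) :
    Bornology.IsBounded {ξ : Esp N | lapSymbol ξ ≤ r} := by
  refine (Metric.isBounded_closedBall (x := (0 : Esp N)) (r := √r)).subset fun ξ hξ => ?_
  refine mem_closedBall_zero_iff.2 (Real.le_sqrt_of_sq_le (le_trans ?_ hξ))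
  refine le_mul_of_one_le_left (sq_nonneg _) ?_
  nlinarith [Real.pi_gt_three]

theorem isCompact_setOf_lapSymbol_le (r : ℝ) : IsCompact {ξ : Esp N | lapSymbol ξ ≤ r} :=
  Metric.isCompact_of_isClosed_isBounded (isClosed_le continuous_lapSymbol continuous_const)
    (isBounded_setOf_lapSymbol_le r)

theorem exists_lapSymbol_eq_one (N : ℕ) [NeZero N] : ∃ ξ : Esp N, lapSymbol ξ = 1 := by
  refine ⟨EuclideanSpace.single 0 (2 * Real.pi)⁻¹, ?_⟩
  rw [lapSymbol, PiLp.norm_single, Real.norm_eq_abs, sq_abs]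
  field_simp
  norm_num

theorem memLp_lapSymbol_mul_of_le {f : Esp N → ℂ} {r : ℝ} (hf : MemLp f 2)
    (h : ∀ ξ, f ξ ≠ 0 → lapSymbol ξ ≤ r) : MemLp (fun ξ => -(lapSymbol ξ : ℂ) * f ξ) 2 := by
  refine hf.of_le_mul (c := r) ?_ (ae_of_all _ fun ξ => ?_)
  · exact (Complex.continuous_ofReal.comp continuous_lapSymbol).neg.aestronglyMeasurable.mul
      hf.aestronglyMeasurable
  · rw [norm_mul, norm_neg, Complex.norm_real, Real.norm_of_nonneg (lapSymbol_nonneg ξ)]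
    by_cases hξ : f ξ = 0
    · simp [hξ]
    · exact mul_le_mul_of_nonneg_right (h ξ hξ) (norm_nonneg _)

theorem memLp_pderivSymbol_mul {f : Esp N → ℂ} (hf : MemLp f 2)
    (hk : MemLp (fun ξ => -(lapSymbol ξ : ℂ) * f ξ) 2) (i : Fin N) :
    MemLp (fun ξ => pderivSymbol i ξ * f ξ) 2 := by
  refine (hf.norm.add hk.norm).of_le
    ((continuous_pderivSymbol i).aestronglyMeasurable.mul hf.aestronglyMeasurable)
    (ae_of_all _ fun ξ => ?_)
  have hsymbol : ‖pderivSymbol i ξ‖ ≤ 1 + lapSymbol ξ := by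
    nlinarith [norm_pderivSymbol_sq_le i ξ, sq_nonneg (‖pderivSymbol i ξ‖ - 1)]
  simp only [Pi.add_apply, norm_mul, norm_neg, Complex.norm_real]
  rw [Real.norm_of_nonneg (lapSymbol_nonneg ξ),
    Real.norm_of_nonneg (add_nonneg (norm_nonneg _)
      (mul_nonneg (lapSymbol_nonneg ξ) (norm_nonneg _)))]
  nlinarith [norm_nonneg (f ξ)]

end FrequencySupport

namespace H2

variable {N : ℕ}

/-- The Fourier transform of an element of `H²`. -/
def hat (U : H2 N) : Lp ℂ 2 (volume : Measure (Esp N)) := fourierL2 U.u_mem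

theorem fourierL2_grad (U : H2 N) (i : Fin N) :
    fourierL2 (U.grad_mem i) =ᵐ[volume] fun ξ => pderivSymbol i ξ * U.hat ξ := by
  have h : IsWeakDiv {i} (fun _ => U.u) (U.grad i) := fun φ hφ => by
    simpa using U.grad_spec i φ hφ
  simpa [hat] using h.fourierL2_eq (fun _ => U.u_mem) (U.grad_mem i)

theorem sum_integral_grad_mul_pderivC (U : H2 N) {φ : Esp N → ℂ} (hφ : TestFun φ) :
    ∑ i, ∫ x, U.grad i x * pderivC i φ x = -∫ x, U.lapl x * φ x := by
  rw [← U.lapl_spec φ hφ, integral_mul_lapC U.u_mem hφ, ← Finset.sum_neg_distrib]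
  exact Finset.sum_congr rfl fun i _ => by rw [U.grad_spec i _ (hφ.pderivC i), neg_neg]

theorem fourierL2_lapl (U : H2 N) :
    fourierL2 U.lapl_mem =ᵐ[volume] fun ξ => -(lapSymbol ξ : ℂ) * U.hat ξ := by
  have h : IsWeakDiv Finset.univ U.grad U.lapl := fun φ hφ => U.sum_integral_grad_mul_pderivC hφ
  filter_upwards [h.fourierL2_eq U.grad_mem U.lapl_mem, ae_all_iff.2 U.fourierL2_grad]
    with ξ hdiv hgrad
  rw [hdiv, ← sum_pderivSymbol_sq, Finset.sum_mul]
  exact Finset.sum_congr rfl fun i _ => by rw [hgrad]; ring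

theorem norm_sq_fourierL2_grad (U : H2 N) (i : Fin N) :
    (fun ξ => ‖fourierL2 (U.grad_mem i) ξ‖ ^ 2) =ᵐ[volume]
      fun ξ => ‖pderivSymbol i ξ‖ ^ 2 * ‖U.hat ξ‖ ^ 2 := by
  filter_upwards [U.fourierL2_grad i] with ξ hξ
  rw [hξ, norm_mul, mul_pow]

theorem norm_sq_fourierL2_lapl (U : H2 N) :
    (fun ξ => ‖fourierL2 U.lapl_mem ξ‖ ^ 2) =ᵐ[volume]
      fun ξ => lapSymbol ξ ^ 2 * ‖U.hat ξ‖ ^ 2 := by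
  filter_upwards [U.fourierL2_lapl] with ξ hξ
  rw [hξ, norm_mul, norm_neg, Complex.norm_real, mul_pow, Real.norm_eq_abs, sq_abs]

theorem integrable_norm_sq_hat (U : H2 N) : Integrable fun ξ => ‖U.hat ξ‖ ^ 2 :=
  (Lp.memLp U.hat).norm.integrable_sq

theorem integrable_lapSymbol_mul (U : H2 N) :
    Integrable fun ξ => lapSymbol ξ * ‖U.hat ξ‖ ^ 2 := by
  have h := integrable_finsetSum Finset.univ fun i _ =>
    (Lp.memLp (fourierL2 (U.grad_mem i))).norm.integrable_sq.congr (U.norm_sq_fourierL2_grad i)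
  simpa only [← Finset.sum_mul, sum_norm_pderivSymbol_sq] using h

theorem integrable_lapSymbol_sq_mul (U : H2 N) :
    Integrable fun ξ => lapSymbol ξ ^ 2 * ‖U.hat ξ‖ ^ 2 :=
  (Lp.memLp (fourierL2 U.lapl_mem)).norm.integrable_sq.congr U.norm_sq_fourierL2_lapl

theorem massSq_eq_integral_hat (U : H2 N) : U.massSq = ∫ ξ, ‖U.hat ξ‖ ^ 2 :=
  (integral_norm_sq_fourierL2 U.u_mem).symm

theorem gradSq_eq_integral_hat (U : H2 N) :
    U.gradSq = ∫ ξ, lapSymbol ξ * ‖U.hat ξ‖ ^ 2 := by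
  have hint (i : Fin N) : Integrable fun ξ => ‖pderivSymbol i ξ‖ ^ 2 * ‖U.hat ξ‖ ^ 2 :=
    (Lp.memLp (fourierL2 (U.grad_mem i))).norm.integrable_sq.congr (U.norm_sq_fourierL2_grad i)
  simp only [← sum_norm_pderivSymbol_sq, Finset.sum_mul, gradSq,
    ← integral_norm_sq_fourierL2 (U.grad_mem _)]
  rw [integral_finsetSum _ fun i _ => hint i]
  exact Finset.sum_congr rfl fun i _ => integral_congr_ae (U.norm_sq_fourierL2_grad i)

theorem lapSq_eq_integral_hat (U : H2 N) :
    U.lapSq = ∫ ξ, lapSymbol ξ ^ 2 * ‖U.hat ξ‖ ^ 2 :=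
  (integral_norm_sq_fourierL2 U.lapl_mem).symm.trans (integral_congr_ae U.norm_sq_fourierL2_lapl)

theorem massSq_nonneg (U : H2 N) : 0 ≤ U.massSq := integral_nonneg fun _ => by positivity

theorem lapSq_nonneg (U : H2 N) : 0 ≤ U.lapSq := integral_nonneg fun _ => by positivity

theorem gradSq_nonneg (U : H2 N) : 0 ≤ U.gradSq :=
  Finset.sum_nonneg fun _ _ => integral_nonneg fun _ => by positivity

theorem pPow_nonneg (σ : ℝ) (U : H2 N) : 0 ≤ U.pPow σ := integral_nonneg fun _ => by positivity

theorem lapSq_sub_gradSq_add_massSq (U : H2 N) (t : ℝ) :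
    U.lapSq - 2 * t * U.gradSq + t ^ 2 * U.massSq = ∫ ξ, (lapSymbol ξ - t) ^ 2 * ‖U.hat ξ‖ ^ 2 := by
  have hgrad := U.integrable_lapSymbol_mul.const_mul (2 * t)
  have hsub : Integrable fun ξ =>
      lapSymbol ξ ^ 2 * ‖U.hat ξ‖ ^ 2 - 2 * t * (lapSymbol ξ * ‖U.hat ξ‖ ^ 2) :=
    U.integrable_lapSymbol_sq_mul.sub hgrad
  rw [gradSq_eq_integral_hat, lapSq_eq_integral_hat, massSq_eq_integral_hat,
    ← integral_const_mul, ← integral_const_mul, ← integral_sub U.integrable_lapSymbol_sq_mul hgrad,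
    ← integral_add hsub (U.integrable_norm_sq_hat.const_mul _)]
  congr with ξ
  ring

theorem lapSq_sub_gradSq_add_massSq_nonneg (U : H2 N) (t : ℝ) :
    0 ≤ U.lapSq - 2 * t * U.gradSq + t ^ 2 * U.massSq := by
  rw [lapSq_sub_gradSq_add_massSq]
  exact integral_nonneg fun _ => by positivity

theorem gradSq_sq_le (U : H2 N) : U.gradSq ^ 2 ≤ U.lapSq * U.massSq := by
  have h : discrim U.massSq (-2 * U.gradSq) U.lapSq ≤ 0 :=
    discrim_le_zero fun t => by linarith [U.lapSq_sub_gradSq_add_massSq_nonneg t]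
  rw [discrim] at h
  linarith

theorem gradSq_pos [NeZero N] (U : H2 N) (h : 0 < U.massSq) : 0 < U.gradSq := by
  refine U.gradSq_nonneg.lt_of_ne fun hzero => h.ne' ?_
  rw [gradSq_eq_integral_hat, eq_comm, integral_eq_zero_iff_of_nonneg
    (fun ξ => mul_nonneg (lapSymbol_nonneg ξ) (by positivity)) U.integrable_lapSymbol_mul] at hzero
  rw [massSq_eq_integral_hat, integral_eq_zero_of_ae]
  filter_upwards [hzero, Measure.ae_ne volume (0 : Esp N)] with ξ hξ hne
  have hsymbol : lapSymbol ξ ≠ 0 := by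
    unfold lapSymbol
    positivity
  exact (mul_eq_zero.1 hξ).resolve_left hsymbol

theorem lapSq_pos [NeZero N] (U : H2 N) (h : 0 < U.massSq) : 0 < U.lapSq :=
  pos_of_mul_pos_left ((pow_pos (U.gradSq_pos h) 2).trans_le U.gradSq_sq_le) h.le

/-- The element of `H²` with prescribed Fourier transform `f`. -/
def ofHat {f : Esp N → ℂ} (hf : MemLp f 2)
    (hk : MemLp (fun ξ => -(lapSymbol ξ : ℂ) * f ξ) 2) : H2 N where
  u := fourierInvL2 hf
  grad i := fourierInvL2 (memLp_pderivSymbol_mul hf hk i)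
  lapl := fourierInvL2 hk
  u_mem := Lp.memLp _
  grad_mem _ := Lp.memLp _
  lapl_mem := Lp.memLp _
  grad_spec i := isWeakPDeriv_fourierInvL2 i hf _
  lapl_spec := isWeakLap_fourierInvL2 hf hk

theorem hat_ofHat {f : Esp N → ℂ} (hf : MemLp f 2)
    (hk : MemLp (fun ξ => -(lapSymbol ξ : ℂ) * f ξ) 2) : (ofHat hf hk).hat =ᵐ[volume] f :=
  fourierL2_fourierInvL2 hf _

theorem massSq_ofHat {f : Esp N → ℂ} (hf : MemLp f 2)
    (hk : MemLp (fun ξ => -(lapSymbol ξ : ℂ) * f ξ) 2) :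
    (ofHat hf hk).massSq = ∫ ξ, ‖f ξ‖ ^ 2 := by
  rw [massSq_eq_integral_hat]
  refine integral_congr_ae ?_
  filter_upwards [hat_ofHat hf hk] with ξ hξ
  rw [hξ]

theorem lapSq_ofHat {f : Esp N → ℂ} (hf : MemLp f 2)
    (hk : MemLp (fun ξ => -(lapSymbol ξ : ℂ) * f ξ) 2) :
    (ofHat hf hk).lapSq = ∫ ξ, lapSymbol ξ ^ 2 * ‖f ξ‖ ^ 2 := by
  rw [lapSq_eq_integral_hat]
  refine integral_congr_ae ?_
  filter_upwards [hat_ofHat hf hk] with ξ hξ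
  rw [hξ]

-- The witnesses are wave packets: their Fourier transform lives near the sphere `lapSymbol = 1`.
theorem exists_massSq_pos_lapSq_sub_gradSq_add_massSq_le [NeZero N] {ε : ℝ} (hε : 0 < ε) :
    ∃ U : H2 N, 0 < U.massSq ∧ U.lapSq - 2 * U.gradSq + U.massSq ≤ ε * U.massSq := by
  set S : Set (Esp N) := {ξ | (lapSymbol ξ - 1) ^ 2 < ε}
  have hle : ∀ ξ ∈ S, lapSymbol ξ ≤ ε + 2 := fun ξ hξ => by
    nlinarith [show (lapSymbol ξ - 1) ^ 2 < ε from hξ, sq_nonneg (lapSymbol ξ - 2)]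
  have hopen : IsOpen S :=
    isOpen_lt ((continuous_lapSymbol.sub continuous_const).pow 2) continuous_const
  have hfin : volume S < ⊤ := ((isBounded_setOf_lapSymbol_le _).subset hle).measure_lt_top
  have hne : S.Nonempty := (exists_lapSymbol_eq_one N).imp fun ξ hξ => by
    simpa [S, hξ] using hε
  have hf : MemLp (S.indicator fun _ => (1 : ℂ)) 2 :=
    memLp_indicator_const 2 hopen.measurableSet _ (Or.inr hfin.ne)
  have hk := memLp_lapSymbol_mul_of_le hf fun ξ hξ => hle ξ (Set.mem_of_indicator_ne_zero hξ)
  refine ⟨ofHat hf hk, ?_, ?_⟩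
  · have hnorm (ξ : Esp N) : ‖S.indicator (fun _ => (1 : ℂ)) ξ‖ ^ 2 = S.indicator 1 ξ := by
      by_cases hξ : ξ ∈ S <;> simp [hξ]
    simp only [massSq_ofHat, hnorm, integral_indicator_one hopen.measurableSet]
    exact ENNReal.toReal_pos (hopen.measure_pos _ hne).ne' hfin.ne
  · have hquad := (ofHat hf hk).lapSq_sub_gradSq_add_massSq 1
    rw [mul_one, one_pow, one_mul] at hquad
    rw [hquad, massSq_eq_integral_hat, ← integral_const_mul]
    refine integral_mono_of_nonneg (ae_of_all _ fun ξ => by positivity)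
      ((ofHat hf hk).integrable_norm_sq_hat.const_mul ε) ?_
    filter_upwards [hat_ofHat hf hk] with ξ hξ
    by_cases hmem : ξ ∈ S
    · exact mul_le_mul_of_nonneg_right (le_of_lt hmem) (by positivity)
    · simp [hξ, hmem]

/-- The part of `U` with frequencies in the measurable set `S`. -/
def freqRestrict (U : H2 N) {S : Set (Esp N)} (hS : MeasurableSet S) : H2 N :=
  ofHat (f := S.indicator U.hat) ((Lp.memLp U.hat).indicator hS)
    ((((Lp.memLp (fourierL2 U.lapl_mem)).ae_eq U.fourierL2_lapl).indicator hS).ae_eq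
      (ae_of_all _ fun ξ => by by_cases hξ : ξ ∈ S <;> simp [hξ]))

section FreqRestrict

variable (U : H2 N) {S : Set (Esp N)} (hS : MeasurableSet S)

theorem massSq_freqRestrict : (U.freqRestrict hS).massSq = ∫ ξ in S, ‖U.hat ξ‖ ^ 2 := by
  rw [freqRestrict, massSq_ofHat, ← integral_indicator hS]
  congr with ξ
  by_cases hξ : ξ ∈ S <;> simp [hξ]

theorem lapSq_freqRestrict :
    (U.freqRestrict hS).lapSq = ∫ ξ in S, lapSymbol ξ ^ 2 * ‖U.hat ξ‖ ^ 2 := by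
  rw [freqRestrict, lapSq_ofHat, ← integral_indicator hS]
  congr with ξ
  by_cases hξ : ξ ∈ S <;> simp [hξ]

theorem massSq_freqRestrict_le : (U.freqRestrict hS).massSq ≤ U.massSq := by
  rw [massSq_freqRestrict, massSq_eq_integral_hat]
  exact setIntegral_le_integral U.integrable_norm_sq_hat (ae_of_all _ fun _ => by positivity)

theorem lapSq_freqRestrict_le : (U.freqRestrict hS).lapSq ≤ U.lapSq := by
  rw [lapSq_freqRestrict, lapSq_eq_integral_hat]
  exact setIntegral_le_integral U.integrable_lapSymbol_sq_mul (ae_of_all _ fun _ => by positivity)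

theorem ae_eq_freqRestrict_add_freqRestrict_compl :
    U.u =ᵐ[volume] fun x => (U.freqRestrict hS).u x + (U.freqRestrict hS.compl).u x := by
  have hsum : fourierInvL2 (Lp.memLp U.hat) = fourierInvL2 ((Lp.memLp U.hat).indicator hS) +
      fourierInvL2 ((Lp.memLp U.hat).indicator hS.compl) := by
    simp only [fourierInvL2, ← FourierTransform.fourierInv_add, ← MemLp.toLp_add,
      Set.indicator_self_add_compl]
  have hinv : fourierInvL2 (Lp.memLp U.hat) = U.u_mem.toLp U.u := by
    rw [fourierInvL2, Lp.toLp_coeFn, hat, fourierL2, FourierTransform.fourierInv_fourier_eq]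
  have h := U.u_mem.coeFn_toLp
  rw [← hinv, hsum] at h
  exact h.symm.trans (Lp.coeFn_add _ _)

end FreqRestrict

/-- The part of `U` with frequencies in `{4π²|ξ|² ≤ r}`. -/
def lowFreq (U : H2 N) (r : ℝ) : H2 N :=
  U.freqRestrict (measurableSet_le continuous_lapSymbol.measurable (measurable_const (a := r)))

/-- The part of `U` with frequencies in `{4π²|ξ|² > r}`. -/
def highFreq (U : H2 N) (r : ℝ) : H2 N :=
  U.freqRestrict
    (measurableSet_le continuous_lapSymbol.measurable (measurable_const (a := r))).compl

section LowHigh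

variable (U : H2 N) (r : ℝ)

theorem ae_eq_lowFreq_add_highFreq :
    U.u =ᵐ[volume] fun x => (U.lowFreq r).u x + (U.highFreq r).u x :=
  U.ae_eq_freqRestrict_add_freqRestrict_compl _

theorem massSq_lowFreq_le : (U.lowFreq r).massSq ≤ U.massSq := U.massSq_freqRestrict_le _

theorem lapSq_highFreq_le : (U.highFreq r).lapSq ≤ U.lapSq := U.lapSq_freqRestrict_le _

theorem lapSq_lowFreq_le (hr : 0 ≤ r) : (U.lowFreq r).lapSq ≤ r * U.gradSq := by
  have hS : MeasurableSet {ξ : Esp N | lapSymbol ξ ≤ r} :=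
    measurableSet_le continuous_lapSymbol.measurable measurable_const
  have hnonneg (ξ : Esp N) : 0 ≤ lapSymbol ξ * ‖U.hat ξ‖ ^ 2 :=
    mul_nonneg (lapSymbol_nonneg ξ) (sq_nonneg _)
  calc (U.lowFreq r).lapSq = ∫ ξ in {ξ | lapSymbol ξ ≤ r}, lapSymbol ξ ^ 2 * ‖U.hat ξ‖ ^ 2 :=
        U.lapSq_freqRestrict hS
    _ ≤ ∫ ξ in {ξ | lapSymbol ξ ≤ r}, r * (lapSymbol ξ * ‖U.hat ξ‖ ^ 2) :=
        setIntegral_mono_on U.integrable_lapSymbol_sq_mul.integrableOn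
          (U.integrable_lapSymbol_mul.const_mul r).integrableOn hS fun ξ (hξ : _ ≤ r) => by
            nlinarith [hnonneg ξ]
    _ ≤ ∫ ξ, r * (lapSymbol ξ * ‖U.hat ξ‖ ^ 2) :=
        setIntegral_le_integral (U.integrable_lapSymbol_mul.const_mul r)
          (ae_of_all _ fun ξ => mul_nonneg hr (hnonneg ξ))
    _ = r * U.gradSq := by rw [integral_const_mul, gradSq_eq_integral_hat]

theorem mul_massSq_highFreq_le : r * (U.highFreq r).massSq ≤ U.gradSq := by
  have hS : MeasurableSet {ξ : Esp N | lapSymbol ξ ≤ r}ᶜ :=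
    (measurableSet_le continuous_lapSymbol.measurable measurable_const).compl
  calc r * (U.highFreq r).massSq = ∫ ξ in {ξ | lapSymbol ξ ≤ r}ᶜ, r * ‖U.hat ξ‖ ^ 2 := by
        rw [integral_const_mul, highFreq, massSq_freqRestrict]
    _ ≤ ∫ ξ in {ξ | lapSymbol ξ ≤ r}ᶜ, lapSymbol ξ * ‖U.hat ξ‖ ^ 2 :=
        setIntegral_mono_on (U.integrable_norm_sq_hat.const_mul r).integrableOn
          U.integrable_lapSymbol_mul.integrableOn hS fun ξ hξ =>
            mul_le_mul_of_nonneg_right (le_of_not_ge hξ) (sq_nonneg _)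
    _ ≤ ∫ ξ, lapSymbol ξ * ‖U.hat ξ‖ ^ 2 :=
        setIntegral_le_integral U.integrable_lapSymbol_mul
          (ae_of_all _ fun ξ => mul_nonneg (lapSymbol_nonneg ξ) (sq_nonneg _))
    _ = U.gradSq := U.gradSq_eq_integral_hat.symm

theorem exists_norm_lowFreq_le : ∃ C, ∀ᵐ x, ‖(U.lowFreq r).u x‖ ≤ C := by
  have hS : MeasurableSet {ξ : Esp N | lapSymbol ξ ≤ r} :=
    measurableSet_le continuous_lapSymbol.measurable measurable_const
  have hint : Integrable ({ξ : Esp N | lapSymbol ξ ≤ r}.indicator U.hat) :=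
    (integrable_indicator_iff hS).2 <|
      ((Lp.memLp U.hat).locallyIntegrable (by norm_num)).integrableOn_isCompact
        (isCompact_setOf_lapSymbol_le r)
  exact ⟨_, norm_fourierInvL2_le_integral_norm _ hint⟩

end LowHigh

end H2

theorem integral_add_mul_of_memLp_two {α : Type*} [MeasurableSpace α] {μ : Measure α}
    {f g h : α → ℂ} (hf : MemLp f 2 μ) (hg : MemLp g 2 μ) (hh : MemLp h 2 μ) :
    ∫ x, (f x + g x) * h x ∂μ = ∫ x, f x * h x ∂μ + ∫ x, g x * h x ∂μ := by
  simp only [add_mul]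
  exact integral_add (hf.integrable_mul hh) (hg.integrable_mul hh)

section Dilation

variable {N : ℕ} {l : ℝ}

theorem integral_comp_smul_mul (f g : Esp N → ℂ) (hl : 0 < l) :
    ∫ x, f (l • x) * g x = (l ^ N)⁻¹ • ∫ y, f y * g (l⁻¹ • y) := by
  have h := Measure.integral_comp_smul_of_nonneg volume (fun y => f y * g (l⁻¹ • y)) l (hR := hl.le)
  simpa only [inv_smul_smul₀ hl.ne', finrank_euclideanSpace_fin] using h

theorem integral_comp_pos_smul (f : Esp N → ℝ) (hl : 0 < l) :
    ∫ x, f (l • x) = (l ^ N)⁻¹ * ∫ x, f x := by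
  rw [Measure.integral_comp_smul_of_nonneg volume f l (hR := hl.le), finrank_euclideanSpace_fin,
    smul_eq_mul]

theorem memLp_two_comp_smul {f : Esp N → ℂ} (hf : MemLp f 2) (hl : l ≠ 0) :
    MemLp (fun x => f (l • x)) 2 := by
  have hmap : Measure.QuasiMeasurePreserving (fun x : Esp N => l • x) volume volume := by
    refine ⟨measurable_const_smul l, ?_⟩
    rw [Measure.map_addHaar_smul _ hl]
    exact Measure.smul_absolutelyContinuous
  exact (memLp_two_iff_integrable_sq_norm
    (hf.aestronglyMeasurable.comp_quasiMeasurePreserving hmap)).2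
    (hf.norm.integrable_sq.comp_smul hl)

theorem norm_ofReal_rpow_half_sq (hl : 0 < l) : ‖((l ^ ((N : ℝ) / 2) : ℝ) : ℂ)‖ ^ 2 = l ^ N := by
  rw [Complex.norm_real, Real.norm_eq_abs, sq_abs, ← Real.rpow_mul_natCast hl.le,
    ← Real.rpow_natCast]
  congr 1
  norm_num

end Dilation

namespace H2

variable {N : ℕ}

instance : SMul ℂ (H2 N) where
  smul a U :=
    { u := fun x => a * U.u x
      grad := fun i x => a * U.grad i x
      lapl := fun x => a * U.lapl x
      u_mem := U.u_mem.const_mul a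
      grad_mem := fun i => (U.grad_mem i).const_mul a
      lapl_mem := U.lapl_mem.const_mul a
      grad_spec := fun i φ h => by
        simp only [mul_assoc, integral_const_mul, U.grad_spec i φ h, mul_neg]
      lapl_spec := fun φ h => by simp only [mul_assoc, integral_const_mul, U.lapl_spec φ h] }

instance : Add (H2 N) where
  add U V :=
    { u := fun x => U.u x + V.u x
      grad := fun i x => U.grad i x + V.grad i x
      lapl := fun x => U.lapl x + V.lapl x
      u_mem := U.u_mem.add V.u_mem
      grad_mem := fun i => (U.grad_mem i).add (V.grad_mem i)
      lapl_mem := U.lapl_mem.add V.lapl_mem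
      grad_spec := fun i φ h => by
        rw [integral_add_mul_of_memLp_two U.u_mem V.u_mem ((h.pderivC i).memLp 2),
          integral_add_mul_of_memLp_two (U.grad_mem i) (V.grad_mem i) (h.memLp 2),
          U.grad_spec i φ h, V.grad_spec i φ h, neg_add]
      lapl_spec := fun φ h => by
        rw [integral_add_mul_of_memLp_two U.u_mem V.u_mem (h.lapC.memLp 2),
          integral_add_mul_of_memLp_two U.lapl_mem V.lapl_mem (h.memLp 2),
          U.lapl_spec φ h, V.lapl_spec φ h] }

theorem smul_u (a : ℂ) (U : H2 N) : (a • U).u = fun x => a * U.u x := rfl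

theorem smul_grad (a : ℂ) (U : H2 N) : (a • U).grad = fun i x => a * U.grad i x := rfl

theorem smul_lapl (a : ℂ) (U : H2 N) : (a • U).lapl = fun x => a * U.lapl x := rfl

theorem add_u (U V : H2 N) : (U + V).u = fun x => U.u x + V.u x := rfl

theorem add_grad (U V : H2 N) : (U + V).grad = fun i x => U.grad i x + V.grad i x := rfl

theorem add_lapl (U V : H2 N) : (U + V).lapl = fun x => U.lapl x + V.lapl x := rfl

theorem massSq_smul (a : ℂ) (U : H2 N) : (a • U).massSq = ‖a‖ ^ 2 * U.massSq := by
  simp only [massSq, smul_u, norm_mul, mul_pow, integral_const_mul]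

theorem gradSq_smul (a : ℂ) (U : H2 N) : (a • U).gradSq = ‖a‖ ^ 2 * U.gradSq := by
  simp only [gradSq, smul_grad, norm_mul, mul_pow, integral_const_mul, Finset.mul_sum]

theorem lapSq_smul (a : ℂ) (U : H2 N) : (a • U).lapSq = ‖a‖ ^ 2 * U.lapSq := by
  simp only [lapSq, smul_lapl, norm_mul, mul_pow, integral_const_mul]

theorem pPow_smul (σ : ℝ) (a : ℂ) (U : H2 N) :
    (a • U).pPow σ = ‖a‖ ^ (2 * σ + 2) * U.pPow σ := by
  simp only [pPow, smul_u, norm_mul, Real.mul_rpow (norm_nonneg _) (norm_nonneg _),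
    integral_const_mul]

/-- A test function as an element of `H²`. -/
def ofTestFun {φ : Esp N → ℂ} (hφ : TestFun φ) : H2 N where
  u := φ
  grad i := pderivC i φ
  lapl := lapC φ
  u_mem := hφ.memLp 2
  grad_mem i := (hφ.pderivC i).memLp 2
  lapl_mem := hφ.lapC.memLp 2
  grad_spec i := hφ.isWeakPDeriv i
  lapl_spec := hφ.isWeakLap

/-- The dilation `x ↦ u (l x)`. -/
def dilate (U : H2 N) {l : ℝ} (hl : 0 < l) : H2 N where
  u x := U.u (l • x)
  grad i x := l * U.grad i (l • x)
  lapl x := l ^ 2 * U.lapl (l • x)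
  u_mem := memLp_two_comp_smul U.u_mem hl.ne'
  grad_mem i := (memLp_two_comp_smul (U.grad_mem i) hl.ne').const_mul _
  lapl_mem := (memLp_two_comp_smul U.lapl_mem hl.ne').const_mul _
  grad_spec i φ h := by
    have hspec := U.grad_spec i _ (h.comp_smul (inv_ne_zero hl.ne'))
    have hl' : (l : ℂ) ≠ 0 := by exact_mod_cast hl.ne'
    simp only [pderivC_comp_smul, mul_left_comm _ ((l⁻¹ : ℝ) : ℂ), integral_const_mul] at hspec
    simp only [mul_assoc, integral_const_mul, integral_comp_smul_mul _ _ hl,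
      ← neg_eq_iff_eq_neg.2 hspec, Complex.real_smul]
    push_cast
    field_simp
  lapl_spec φ h := by
    have hspec := U.lapl_spec _ (h.comp_smul (inv_ne_zero hl.ne'))
    have hl' : (l : ℂ) ≠ 0 := by exact_mod_cast hl.ne'
    simp only [lapC_comp_smul, mul_left_comm _ (((l⁻¹ : ℝ) : ℂ) ^ 2), integral_const_mul] at hspec
    simp only [mul_assoc, integral_const_mul, integral_comp_smul_mul _ _ hl, ← hspec,
      Complex.real_smul]
    push_cast
    field_simp

section Dilate

variable (U : H2 N) {l : ℝ} (hl : 0 < l)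

theorem massSq_dilate : (U.dilate hl).massSq = (l ^ N)⁻¹ * U.massSq :=
  integral_comp_pos_smul (fun x => ‖U.u x‖ ^ 2) hl

theorem pPow_dilate (σ : ℝ) : (U.dilate hl).pPow σ = (l ^ N)⁻¹ * U.pPow σ :=
  integral_comp_pos_smul (fun x => ‖U.u x‖ ^ (2 * σ + 2)) hl

theorem gradSq_dilate : (U.dilate hl).gradSq = (l ^ N)⁻¹ * (l ^ 2 * U.gradSq) := by
  simp only [gradSq, dilate, norm_mul, mul_pow, integral_const_mul, Complex.norm_real,
    Real.norm_eq_abs, sq_abs, Finset.mul_sum]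
  refine Finset.sum_congr rfl fun i _ => ?_
  rw [integral_comp_pos_smul (fun x => ‖U.grad i x‖ ^ 2) hl, mul_left_comm]

theorem lapSq_dilate : (U.dilate hl).lapSq = (l ^ N)⁻¹ * (l ^ 4 * U.lapSq) := by
  simp only [lapSq, dilate, norm_mul, mul_pow, integral_const_mul, norm_pow, Complex.norm_real,
    Real.norm_eq_abs, sq_abs, integral_comp_pos_smul (fun x => ‖U.lapl x‖ ^ 2) hl]
  ring

end Dilate

section Concentrate

variable (U : H2 N) {l : ℝ} (hl : 0 < l)

/-- The mass-preserving dilation `x ↦ l^{N/2} u (l x)`. -/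
def concentrate : H2 N := ((l ^ ((N : ℝ) / 2) : ℝ) : ℂ) • U.dilate hl

theorem massSq_concentrate : (U.concentrate hl).massSq = U.massSq := by
  rw [concentrate, massSq_smul, massSq_dilate,
    norm_ofReal_rpow_half_sq hl, mul_inv_cancel_left₀ (by positivity)]

theorem gradSq_concentrate : (U.concentrate hl).gradSq = l ^ 2 * U.gradSq := by
  rw [concentrate, gradSq_smul, gradSq_dilate,
    norm_ofReal_rpow_half_sq hl, mul_inv_cancel_left₀ (by positivity)]

theorem lapSq_concentrate : (U.concentrate hl).lapSq = l ^ 4 * U.lapSq := by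
  rw [concentrate, lapSq_smul, lapSq_dilate,
    norm_ofReal_rpow_half_sq hl, mul_inv_cancel_left₀ (by positivity)]

theorem pPow_concentrate (σ : ℝ) :
    (U.concentrate hl).pPow σ = l ^ ((N : ℝ) * σ) * U.pPow σ := by
  have hpow : ‖((l ^ ((N : ℝ) / 2) : ℝ) : ℂ)‖ ^ (2 * σ + 2) = l ^ ((N : ℝ) * σ) * l ^ N := by
    rw [Complex.norm_real, Real.norm_of_nonneg (by positivity), ← Real.rpow_mul hl.le,
      ← Real.rpow_natCast, ← Real.rpow_add hl]
    congr 1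
    ring
  rw [concentrate, pPow_smul, pPow_dilate, hpow, mul_assoc, mul_inv_cancel_left₀ (by positivity)]

end Concentrate

section SqrtSmul

variable (U : H2 N) {s : ℝ}

/-- The multiple `√s u`, whose mass is `s` times the mass of `u`. -/
def sqrtSmul (s : ℝ) : H2 N := (√s : ℂ) • U

theorem massSq_sqrtSmul (hs : 0 ≤ s) : (U.sqrtSmul s).massSq = s * U.massSq := by
  rw [sqrtSmul, massSq_smul, Complex.norm_real, Real.norm_eq_abs, sq_abs, Real.sq_sqrt hs]

theorem gradSq_sqrtSmul (hs : 0 ≤ s) : (U.sqrtSmul s).gradSq = s * U.gradSq := by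
  rw [sqrtSmul, gradSq_smul, Complex.norm_real, Real.norm_eq_abs, sq_abs, Real.sq_sqrt hs]

theorem lapSq_sqrtSmul (hs : 0 ≤ s) : (U.sqrtSmul s).lapSq = s * U.lapSq := by
  rw [sqrtSmul, lapSq_smul, Complex.norm_real, Real.norm_eq_abs, sq_abs, Real.sq_sqrt hs]

theorem pPow_sqrtSmul (σ : ℝ) (hs : 0 ≤ s) :
    (U.sqrtSmul s).pPow σ = s ^ (σ + 1) * U.pPow σ := by
  rw [sqrtSmul, pPow_smul, Complex.norm_real, Real.norm_of_nonneg (Real.sqrt_nonneg s),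
    Real.sqrt_eq_rpow, ← Real.rpow_mul hs]
  congr 2
  ring

end SqrtSmul

end H2

theorem memLp_rpow_of_memLp_two_of_norm_le {α : Type*} [MeasurableSpace α] {μ : Measure α}
    {f : α → ℂ} {σ C : ℝ} (hσ : 0 ≤ σ) (hf : MemLp f 2 μ) (hC : ∀ᵐ x ∂μ, ‖f x‖ ≤ C) :
    MemLp f (ENNReal.ofReal (2 * σ + 2)) μ := by
  have hp : 0 < 2 * σ + 2 := by linarith
  rw [← integrable_norm_rpow_iff hf.aestronglyMeasurable (by simpa using hp) ENNReal.ofReal_ne_top,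
    ENNReal.toReal_ofReal hp.le]
  refine Integrable.mono' (hf.norm.integrable_sq.const_mul (C ^ (2 * σ)))
    (hf.aestronglyMeasurable.norm.aemeasurable.pow_const _).aestronglyMeasurable ?_
  filter_upwards [hC] with x hx
  rw [Real.norm_of_nonneg (by positivity), Real.rpow_add_of_nonneg (norm_nonneg _) (by positivity)
    (by norm_num), Real.rpow_two]
  gcongr

theorem norm_add_rpow_le {E : Type*} [SeminormedAddCommGroup E] (a b : E) {p : ℝ} (hp : 1 ≤ p) :
    ‖a + b‖ ^ p ≤ 2 ^ (p - 1) * (‖a‖ ^ p + ‖b‖ ^ p) := by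
  have h := NNReal.rpow_add_le_mul_rpow_add_rpow ‖a‖₊ ‖b‖₊ hp
  calc ‖a + b‖ ^ p ≤ (‖a‖ + ‖b‖) ^ p := by
        gcongr
        exact norm_add_le a b
    _ ≤ 2 ^ (p - 1) * (‖a‖ ^ p + ‖b‖ ^ p) := by exact_mod_cast h

/-- The energy is bounded below on the elements of `H²` with mass `t`. -/
def EnergyBddBelow (N : ℕ) (σ t : ℝ) : Prop := ∃ K, ∀ V : H2 N, V.massSq = t → K ≤ V.energy σ

/-- The Gagliardo–Nirenberg inequality `‖u‖_{2σ+2}^{2σ+2} ≤ C ‖Δu‖₂^{Nσ/2} ‖u‖₂^{2σ+2-Nσ/2}` with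
constant `C`; in terms of the squared norms the exponents are halved. -/
structure GagliardoNirenberg (N : ℕ) (σ C : ℝ) : Prop where
  nonneg : 0 ≤ C
  pPow_le : ∀ V : H2 N,
    V.pPow σ ≤ C * V.lapSq ^ ((N : ℝ) * σ / 4) * V.massSq ^ (σ + 1 - (N : ℝ) * σ / 4)

namespace H2

variable {N : ℕ} {σ m : ℝ}

section Lp

variable (U : H2 N)

theorem eLpNorm_two : eLpNorm U.u 2 volume = ENNReal.ofReal √U.massSq := by
  rw [U.u_mem.eLpNorm_eq_integral_rpow_norm (by norm_num) (by norm_num), Real.sqrt_eq_rpow, massSq]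
  norm_num

theorem eLpNorm_eq_pPow_rpow (hσ : 0 < σ) (h : MemLp U.u (ENNReal.ofReal (2 * σ + 2))) :
    eLpNorm U.u (ENNReal.ofReal (2 * σ + 2)) volume =
      ENNReal.ofReal (U.pPow σ ^ (2 * σ + 2)⁻¹) := by
  have hp : 0 < 2 * σ + 2 := by linarith
  rw [h.eLpNorm_eq_integral_rpow_norm (by simpa using hp) ENNReal.ofReal_ne_top,
    ENNReal.toReal_ofReal hp.le, pPow]

theorem ae_eq_zero_of_massSq_eq_zero (h : U.massSq = 0) : U.u =ᵐ[volume] 0 := by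
  rw [massSq, integral_eq_zero_iff_of_nonneg (fun _ => by positivity)
    U.u_mem.norm.integrable_sq] at h
  filter_upwards [h] with x hx
  simpa using hx

theorem pPow_eq_zero_of_massSq_eq_zero (hσ : 0 < σ) (h : U.massSq = 0) : U.pPow σ = 0 := by
  refine integral_eq_zero_of_ae ?_
  filter_upwards [U.ae_eq_zero_of_massSq_eq_zero h] with x hx
  simp only [hx, Pi.zero_apply, norm_zero]
  exact Real.zero_rpow (by linarith)

theorem tendsto_eLpNorm_lowFreq_sub :
    Tendsto (fun n : ℕ => eLpNorm ((U.lowFreq n).u - U.u) 2 volume) atTop (𝓝 0) := by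
  have hnorm (n : ℕ) : eLpNorm ((U.lowFreq n).u - U.u) 2 volume =
      ENNReal.ofReal √(U.highFreq n).massSq := by
    rw [← eLpNorm_two, eLpNorm_sub_comm]
    refine eLpNorm_congr_ae ?_
    filter_upwards [U.ae_eq_lowFreq_add_highFreq n] with x hx
    rw [Pi.sub_apply, hx, add_sub_cancel_left]
  have hmass : Tendsto (fun n : ℕ => (U.highFreq n).massSq) atTop (𝓝 0) := by
    refine squeeze_zero' (.of_forall fun n => massSq_nonneg _) ?_
      (tendsto_const_div_atTop_nhds_zero_nat U.gradSq)
    filter_upwards [eventually_gt_atTop 0] with n hn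
    exact (le_div_iff₀' (by exact_mod_cast hn)).2 (U.mul_massSq_highFreq_le n)
  simpa [hnorm] using ENNReal.tendsto_ofReal hmass.sqrt

end Lp

/-- The quotient bounded by the Gagliardo–Nirenberg inequality. -/
def gnQuotient (σ : ℝ) (U : H2 N) : ℝ :=
  U.pPow σ / (U.lapSq ^ ((N : ℝ) * σ / 4) * U.massSq ^ (σ + 1 - (N : ℝ) * σ / 4))

theorem gnQuotient_sqrtSmul (U : H2 N) {s : ℝ} (hs : 0 < s) :
    (U.sqrtSmul s).gnQuotient σ = U.gnQuotient σ := by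
  have hpow : s ^ (σ + 1) = s ^ ((N : ℝ) * σ / 4) * s ^ (σ + 1 - (N : ℝ) * σ / 4) := by
    rw [← Real.rpow_add hs]
    congr 1
    ring
  rw [gnQuotient, pPow_sqrtSmul _ _ hs.le, lapSq_sqrtSmul _ hs.le, massSq_sqrtSmul _ hs.le,
    Real.mul_rpow hs.le U.lapSq_nonneg, Real.mul_rpow hs.le U.massSq_nonneg, mul_mul_mul_comm,
    ← hpow, mul_div_mul_left _ _ (Real.rpow_pos_of_pos hs _).ne', gnQuotient]

theorem gnQuotient_concentrate (U : H2 N) {l : ℝ} (hl : 0 < l) :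
    (U.concentrate hl).gnQuotient σ = U.gnQuotient σ := by
  have hpow : (l ^ 4) ^ ((N : ℝ) * σ / 4) = l ^ ((N : ℝ) * σ) := by
    rw [← Real.rpow_natCast, ← Real.rpow_mul hl.le]
    congr 1
    push_cast
    ring
  rw [gnQuotient, pPow_concentrate, lapSq_concentrate, massSq_concentrate,
    Real.mul_rpow (by positivity) U.lapSq_nonneg, hpow, mul_assoc,
    mul_div_mul_left _ _ (Real.rpow_pos_of_pos hl _).ne', gnQuotient]

theorem exists_massSq_eq_lapSq_eq_one_gnQuotient_eq [NeZero N] (U : H2 N) (hU : 0 < U.massSq)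
    (hm : 0 < m) :
    ∃ W : H2 N, W.massSq = m ∧ W.lapSq = 1 ∧ W.gnQuotient σ = U.gnQuotient σ := by
  have hs : 0 < m / U.massSq := div_pos hm hU
  have hA : 0 < m / U.massSq * U.lapSq := mul_pos hs (U.lapSq_pos hU)
  have hl := Real.rpow_pos_of_pos hA (-(1 / 4))
  refine ⟨(U.sqrtSmul (m / U.massSq)).concentrate hl, ?_, ?_, ?_⟩
  · rw [massSq_concentrate, massSq_sqrtSmul _ hs.le, div_mul_cancel₀ _ hU.ne']
  · rw [lapSq_concentrate, lapSq_sqrtSmul _ hs.le, ← Real.rpow_mul_natCast hA.le,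
      ← Real.rpow_add_one hA.ne']
    norm_num
  · rw [gnQuotient_concentrate, gnQuotient_sqrtSmul _ hs]

theorem gnQuotient_le_of_energy_ge {K : ℝ} (hσ : 0 < σ) {W : H2 N} (hA : W.lapSq = 1)
    (hK : K ≤ W.energy σ) :
    W.gnQuotient σ ≤ (σ + 1) * (1 + |K|) / W.massSq ^ (σ + 1 - (N : ℝ) * σ / 4) := by
  rw [gnQuotient, hA, Real.one_rpow, one_mul]
  have hP : 1 / (σ + 1) * W.pPow σ ≤ 1 + |K| := by
    rw [energy, hA] at hK
    linarith [W.gradSq_nonneg, neg_abs_le K]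
  rw [one_div, inv_mul_le_iff₀ (by linarith)] at hP
  have := W.massSq_nonneg
  gcongr

theorem _root_.EnergyBddBelow.exists_gagliardoNirenberg [NeZero N] (hσ : 0 < σ) (hm : 0 < m)
    (h : EnergyBddBelow N σ m) : ∃ C, GagliardoNirenberg N σ C := by
  obtain ⟨K, hK⟩ := h
  refine ⟨(σ + 1) * (1 + |K|) / m ^ (σ + 1 - (N : ℝ) * σ / 4), by positivity, fun V => ?_⟩
  rcases V.massSq_nonneg.eq_or_lt with hV | hV
  · rw [V.pPow_eq_zero_of_massSq_eq_zero hσ hV.symm]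
    have := V.lapSq_nonneg
    have := V.massSq_nonneg
    positivity
  · obtain ⟨W, hWm, hWA, hWQ⟩ := V.exists_massSq_eq_lapSq_eq_one_gnQuotient_eq (σ := σ) hV hm
    have hQ := gnQuotient_le_of_energy_ge hσ hWA (hK W hWm)
    have := V.lapSq_pos hV
    rwa [hWQ, hWm, gnQuotient, div_le_iff₀ (by positivity), ← mul_assoc] at hQ

end H2

namespace GagliardoNirenberg

open H2

variable {N : ℕ} {σ C : ℝ}

theorem pPow_le_of_le (h : GagliardoNirenberg N σ C) (hσ : 0 < σ) (hcrit : (N : ℝ) * σ ≤ 4)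
    {V : H2 N} {A M : ℝ} (hA : V.lapSq ≤ A) (hM : V.massSq ≤ M) :
    V.pPow σ ≤ C * A ^ ((N : ℝ) * σ / 4) * M ^ (σ + 1 - (N : ℝ) * σ / 4) := by
  have hexp : 0 ≤ σ + 1 - (N : ℝ) * σ / 4 := by linarith
  have := h.nonneg
  have := V.lapSq_nonneg
  have := V.massSq_nonneg
  have hA0 := V.lapSq_nonneg.trans hA
  exact (h.pPow_le V).trans (by gcongr)

-- Low-frequency parts are bounded, hence in every `Lᵖ` with `p ≥ 2`, with uniformly bounded
-- `Lᵖ`-norms by the inequality; Fatou's lemma passes to the limit.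
theorem memLp (h : GagliardoNirenberg N σ C) (hσ : 0 < σ) (hcrit : (N : ℝ) * σ ≤ 4) (U : H2 N) :
    MemLp U.u (ENNReal.ofReal (2 * σ + 2)) := by
  have hlow (n : ℕ) : MemLp (U.lowFreq n).u (ENNReal.ofReal (2 * σ + 2)) :=
    (U.exists_norm_lowFreq_le n).elim fun _ hbound =>
      memLp_rpow_of_memLp_two_of_norm_le hσ.le (U.lowFreq n).u_mem hbound
  set B := C * U.lapSq ^ ((N : ℝ) * σ / 4) * U.massSq ^ (σ + 1 - (N : ℝ) * σ / 4)
  have hbound (n : ℕ) : eLpNorm (U.lowFreq n).u (ENNReal.ofReal (2 * σ + 2)) volume ≤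
      ENNReal.ofReal (B ^ (2 * σ + 2)⁻¹) := by
    rw [(U.lowFreq n).eLpNorm_eq_pPow_rpow hσ (hlow n)]
    have := (U.lowFreq n).pPow_nonneg σ
    gcongr
    exact h.pPow_le_of_le hσ hcrit (U.lapSq_freqRestrict_le _) (U.massSq_lowFreq_le n)
  have hlim : TendstoInMeasure volume (fun n : ℕ => (U.lowFreq n).u) atTop U.u :=
    tendstoInMeasure_of_tendsto_eLpNorm (by norm_num)
      (fun n => (U.lowFreq n).u_mem.aestronglyMeasurable) U.u_mem.aestronglyMeasurable
      U.tendsto_eLpNorm_lowFreq_sub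
  exact ⟨U.u_mem.aestronglyMeasurable,
    (eLpNorm_le_of_tendstoInMeasure (.of_forall hbound) hlim
      fun n => (U.lowFreq n).u_mem.aestronglyMeasurable).trans_lt ENNReal.ofReal_lt_top⟩

theorem integrable_norm_rpow (h : GagliardoNirenberg N σ C) (hσ : 0 < σ)
    (hcrit : (N : ℝ) * σ ≤ 4) (U : H2 N) : Integrable fun x => ‖U.u x‖ ^ (2 * σ + 2) := by
  have hp : 0 < 2 * σ + 2 := by linarith
  have hint := (h.memLp hσ hcrit U).integrable_norm_rpow (by simpa using hp) ENNReal.ofReal_ne_top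
  rwa [ENNReal.toReal_ofReal hp.le] at hint

theorem pPow_pos (h : GagliardoNirenberg N σ C) (hσ : 0 < σ) (hcrit : (N : ℝ) * σ ≤ 4) {U : H2 N}
    (hU : 0 < U.massSq) : 0 < U.pPow σ := by
  refine (U.pPow_nonneg σ).lt_of_ne fun hzero => hU.ne' (integral_eq_zero_of_ae ?_)
  rw [pPow, eq_comm, integral_eq_zero_iff_of_nonneg (fun _ => by positivity)
    (h.integrable_norm_rpow hσ hcrit U)] at hzero
  filter_upwards [hzero] with x hx
  have hx := (Real.rpow_eq_zero (norm_nonneg _) (by linarith)).1 hx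
  simp [hx]

theorem pPow_le_add (h : GagliardoNirenberg N σ C) (hσ : 0 < σ) (hcrit : (N : ℝ) * σ ≤ 4)
    {U V W : H2 N} (hsum : U.u =ᵐ[volume] fun x => V.u x + W.u x) :
    U.pPow σ ≤ 2 ^ (2 * σ + 1) * (V.pPow σ + W.pPow σ) := by
  have hV := h.integrable_norm_rpow hσ hcrit V
  have hW := h.integrable_norm_rpow hσ hcrit W
  rw [pPow, pPow, pPow, ← integral_add hV hW, ← integral_const_mul]
  refine integral_mono_ae (h.integrable_norm_rpow hσ hcrit U) ((hV.add hW).const_mul _) ?_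
  filter_upwards [hsum] with x hx
  have hle := norm_add_rpow_le (V.u x) (W.u x) (p := 2 * σ + 2) (by linarith)
  rwa [← hx, show 2 * σ + 2 - 1 = 2 * σ + 1 by ring] at hle

end GagliardoNirenberg

namespace H2

variable {N : ℕ} {σ s t m : ℝ}

/-- The value of `1 + c` in the equation `Δ²u + 2Δu + (1 + c)u = |u|^{2σ}u` that is obtained by
testing the equation against `u` itself. -/
def multiplier (σ : ℝ) (U : H2 N) : ℝ := (U.pPow σ + 2 * U.gradSq - U.lapSq) / U.massSq

theorem energy_sqrtSmul (σ : ℝ) (U : H2 N) (hs : 0 ≤ s) :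
    (U.sqrtSmul s).energy σ = s * U.energy σ - 1 / (σ + 1) * U.pPow σ * (s ^ (σ + 1) - s) := by
  rw [energy, energy, lapSq_sqrtSmul _ hs, gradSq_sqrtSmul _ hs, pPow_sqrtSmul _ _ hs]
  ring

/-- The positive multiple of `u` that has mass `t` (for `u ≠ 0` and `t ≥ 0`). -/
def withMass (U : H2 N) (t : ℝ) : H2 N := U.sqrtSmul (t / U.massSq)

section WithMass

variable {U : H2 N}

theorem massSq_withMass (hU : 0 < U.massSq) (ht : 0 ≤ t) : (U.withMass t).massSq = t := by
  rw [withMass, massSq_sqrtSmul _ (by positivity), div_mul_cancel₀ _ hU.ne']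

theorem energy_sub_multiplier_mul_sub_energy_withMass (hU : 0 < U.massSq) (hσ : 0 < σ)
    (ht : 0 ≤ t) :
    U.energy σ - U.multiplier σ * (t - U.massSq) - (U.withMass t).energy σ =
      1 / (σ + 1) * U.pPow σ *
        ((t / U.massSq) ^ (σ + 1) - (1 + (σ + 1) * (t / U.massSq - 1))) := by
  rw [withMass, energy_sqrtSmul σ U (by positivity), energy, multiplier]
  field_simp
  ring

theorem energy_withMass_le (hU : 0 < U.massSq) (hσ : 0 < σ) (ht : 0 ≤ t) :
    (U.withMass t).energy σ ≤ U.energy σ - U.multiplier σ * (t - U.massSq) := by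
  have hs : 0 ≤ t / U.massSq := by positivity
  have hbernoulli : 1 + (σ + 1) * (t / U.massSq - 1) ≤ (1 + (t / U.massSq - 1)) ^ (σ + 1) :=
    one_add_mul_self_le_rpow_one_add (by linarith) (by linarith)
  rw [add_sub_cancel] at hbernoulli
  have hP := U.pPow_nonneg σ
  rw [← sub_nonneg, energy_sub_multiplier_mul_sub_energy_withMass hU hσ ht]
  exact mul_nonneg (by positivity) (sub_nonneg.2 hbernoulli)

theorem energy_withMass_lt (hU : 0 < U.massSq) (hσ : 0 < σ) (ht : 0 ≤ t) (hP : 0 < U.pPow σ)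
    (hne : t ≠ U.massSq) :
    (U.withMass t).energy σ < U.energy σ - U.multiplier σ * (t - U.massSq) := by
  have hs : 0 ≤ t / U.massSq := by positivity
  have hs1 : t / U.massSq - 1 ≠ 0 := by rwa [sub_ne_zero, ne_eq, div_eq_one_iff_eq hU.ne']
  have hbernoulli : 1 + (σ + 1) * (t / U.massSq - 1) < (1 + (t / U.massSq - 1)) ^ (σ + 1) :=
    one_add_mul_self_lt_rpow_one_add (by linarith) hs1 (by linarith)
  rw [add_sub_cancel] at hbernoulli
  rw [← sub_pos, energy_sub_multiplier_mul_sub_energy_withMass hU hσ ht]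
  exact mul_pos (by positivity) (sub_pos.2 hbernoulli)

theorem massSq_mul_energy_withMass_le (hU : 0 < U.massSq) (hσ : 0 < σ) (ht : U.massSq ≤ t) :
    U.massSq * (U.withMass t).energy σ ≤ t * U.energy σ := by
  have hs : 1 ≤ t / U.massSq := (one_le_div hU).2 ht
  have hpow : t / U.massSq ≤ (t / U.massSq) ^ (σ + 1) :=
    Real.self_le_rpow_of_one_le hs (by linarith)
  have hP := U.pPow_nonneg σ
  have hnonneg : 0 ≤ 1 / (σ + 1) * U.pPow σ * ((t / U.massSq) ^ (σ + 1) - t / U.massSq) :=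
    mul_nonneg (by positivity) (sub_nonneg.2 hpow)
  rw [withMass, energy_sqrtSmul σ U (by positivity), mul_sub, ← mul_assoc,
    mul_div_cancel₀ _ hU.ne']
  exact sub_le_self _ (mul_nonneg hU.le hnonneg)

end WithMass

/-- `u` is a nonzero minimizer of the energy among the functions of the same mass. -/
structure IsMinimizer (σ : ℝ) (U : H2 N) : Prop where
  massSq_pos : 0 < U.massSq
  energy_le : ∀ V : H2 N, V.massSq = U.massSq → U.energy σ ≤ V.energy σ

theorem exists_massSq_eq_energy_le [NeZero N] (hσ : 0 < σ) (hm : 0 < m) {ε : ℝ} (hε : 0 < ε) :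
    ∃ U : H2 N, U.massSq = m ∧ U.energy σ ≤ -m + ε := by
  obtain ⟨U, hU, hle⟩ := exists_massSq_pos_lapSq_sub_gradSq_add_massSq_le (N := N) (div_pos hε hm)
  have hs : 0 ≤ m / U.massSq := by positivity
  have hP : 0 ≤ 1 / (σ + 1) * (U.withMass m).pPow σ :=
    mul_nonneg (by positivity) (pPow_nonneg σ _)
  have hscaled := mul_le_mul_of_nonneg_left hle hs
  have hM : m / U.massSq * U.massSq = m := div_mul_cancel₀ _ hU.ne'
  have hε' : m / U.massSq * (ε / m * U.massSq) = ε := by field_simp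
  refine ⟨U.withMass m, massSq_withMass hU hm.le, ?_⟩
  rw [withMass] at hP ⊢
  rw [energy, lapSq_sqrtSmul _ hs, gradSq_sqrtSmul _ hs]
  linarith

namespace IsMinimizer

variable {U V : H2 N}

theorem energyBddBelow (hU : U.IsMinimizer σ) : EnergyBddBelow N σ U.massSq :=
  ⟨U.energy σ, hU.energy_le⟩

theorem energy_le_neg_massSq [NeZero N] (hU : U.IsMinimizer σ) (hσ : 0 < σ) :
    U.energy σ ≤ -U.massSq := by
  refine le_of_forall_pos_le_add fun ε hε => ?_
  obtain ⟨V, hV, hle⟩ := exists_massSq_eq_energy_le (N := N) hσ hU.massSq_pos hε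
  exact (hU.energy_le V hV).trans hle

theorem pPow_pos [NeZero N] (hU : U.IsMinimizer σ) (hσ : 0 < σ) (hcrit : (N : ℝ) * σ ≤ 4) :
    0 < U.pPow σ := by
  obtain ⟨C, hC⟩ := hU.energyBddBelow.exists_gagliardoNirenberg hσ hU.massSq_pos
  exact hC.pPow_pos hσ hcrit hU.massSq_pos

theorem one_lt_multiplier [NeZero N] (hU : U.IsMinimizer σ) (hσ : 0 < σ)
    (hcrit : (N : ℝ) * σ ≤ 4) : 1 < U.multiplier σ := by
  have hP := hU.pPow_pos hσ hcrit
  have hE := hU.energy_le_neg_massSq hσ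
  have hlt : 1 / (σ + 1) * U.pPow σ < U.pPow σ :=
    mul_lt_of_lt_one_left hP ((div_lt_one (by linarith)).2 (by linarith))
  rw [energy] at hE
  rw [multiplier, lt_div_iff₀ hU.massSq_pos]
  linarith [U.lapSq_sub_gradSq_add_massSq_nonneg 1]

theorem multiplier_lt_multiplier [NeZero N] (hU : U.IsMinimizer σ) (hV : V.IsMinimizer σ)
    (hσ : 0 < σ) (hcrit : (N : ℝ) * σ ≤ 4) (hUV : U.massSq < V.massSq) :
    U.multiplier σ < V.multiplier σ := by
  have hV' := (hV.energy_le _ (massSq_withMass hU.massSq_pos hV.massSq_pos.le)).trans_lt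
    (energy_withMass_lt hU.massSq_pos hσ hV.massSq_pos.le (hU.pPow_pos hσ hcrit) hUV.ne')
  have hU' := (hU.energy_le _ (massSq_withMass hV.massSq_pos hU.massSq_pos.le)).trans_lt
    (energy_withMass_lt hV.massSq_pos hσ hU.massSq_pos.le (hV.pPow_pos hσ hcrit) hUV.ne)
  refine lt_of_mul_lt_mul_right (a := V.massSq - U.massSq) ?_ (sub_pos.2 hUV).le
  linarith

end IsMinimizer

end H2

theorem exists_mul_rpow_le_mul_add {C ε q : ℝ} (hC : 0 ≤ C) (hε : 0 < ε) (hq0 : 0 ≤ q)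
    (hq : q < 1) : ∃ K, ∀ A : ℝ, 0 ≤ A → C * A ^ q ≤ ε * A + K := by
  have hB : 0 ≤ C / ε ^ q := by positivity
  refine ⟨(C / ε ^ q) ^ (1 - q)⁻¹, fun A hA => ?_⟩
  have hεA : 0 ≤ ε * A := by positivity
  have hK : 0 ≤ (C / ε ^ q) ^ (1 - q)⁻¹ := by positivity
  have hyoung := Real.geom_mean_le_arith_mean2_weighted hq0 (sub_nonneg.2 hq.le) hεA hK
    (add_sub_cancel q 1)
  rw [Real.rpow_inv_rpow hB (sub_pos.2 hq).ne', Real.mul_rpow hε.le hA, mul_comm (ε ^ q),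
    mul_assoc, mul_div_cancel₀ _ (Real.rpow_pos_of_pos hε q).ne', mul_comm (A ^ q)] at hyoung
  nlinarith

namespace EnergyBddBelow

variable {N : ℕ} {σ a K m t : ℝ}

open H2

theorem of_pPow_le (ha : 0 < a)
    (h : ∀ V : H2 N, V.massSq = t → 1 / (σ + 1) * V.pPow σ ≤ (1 - a) * V.lapSq + K) :
    EnergyBddBelow N σ t := by
  refine ⟨-(a⁻¹ * t + K), fun V hV => ?_⟩
  have hgrad := mul_nonneg ha.le (V.lapSq_sub_gradSq_add_massSq_nonneg a⁻¹)
  have hexpand : a * (V.lapSq - 2 * a⁻¹ * V.gradSq + a⁻¹ ^ 2 * V.massSq) =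
      a * V.lapSq - 2 * V.gradSq + a⁻¹ * V.massSq := by
    field_simp
  rw [hexpand, hV] at hgrad
  rw [energy]
  linarith [h V hV]

theorem of_le (h : EnergyBddBelow N σ m) (hσ : 0 < σ) (ht : 0 < t) (htm : t ≤ m) :
    EnergyBddBelow N σ t := by
  obtain ⟨K, hK⟩ := h
  refine ⟨t * K / m, fun V hV => ?_⟩
  subst hV
  have hscale := V.massSq_mul_energy_withMass_le ht hσ htm
  rw [div_le_iff₀' (ht.trans_le htm)]
  exact (mul_le_mul_of_nonneg_left (hK _ (massSq_withMass ht (ht.le.trans htm))) ht.le).trans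
    hscale

end EnergyBddBelow

namespace GagliardoNirenberg

variable {N : ℕ} {σ C t : ℝ}

open H2

theorem energyBddBelow (h : GagliardoNirenberg N σ C) (hσ : 0 < σ) (hcrit : (N : ℝ) * σ < 4)
    (ht : 0 ≤ t) : EnergyBddBelow N σ t := by
  have hC := h.nonneg
  obtain ⟨K, hK⟩ := exists_mul_rpow_le_mul_add (ε := 1 - 1 / 2) (q := (N : ℝ) * σ / 4)
    (C := 1 / (σ + 1) * (C * t ^ (σ + 1 - (N : ℝ) * σ / 4))) (by positivity) (by norm_num)
    (by positivity) (by linarith)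
  refine .of_pPow_le one_half_pos (K := K) fun V hV => ?_
  calc 1 / (σ + 1) * V.pPow σ
      ≤ 1 / (σ + 1) * (C * V.lapSq ^ ((N : ℝ) * σ / 4) * t ^ (σ + 1 - (N : ℝ) * σ / 4)) := by
        rw [← hV]
        gcongr
        exact h.pPow_le V
    _ = 1 / (σ + 1) * (C * t ^ (σ + 1 - (N : ℝ) * σ / 4)) * V.lapSq ^ ((N : ℝ) * σ / 4) := by ring
    _ ≤ _ := hK _ V.lapSq_nonneg

theorem pPow_le_of_le_of_eq (h : GagliardoNirenberg N σ C) (hσ : 0 < σ)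
    (hcrit : (N : ℝ) * σ = 4) {V : H2 N} {A M : ℝ} (hA : V.lapSq ≤ A) (hM : V.massSq ≤ M) :
    V.pPow σ ≤ C * A * M ^ σ := by
  have hle := h.pPow_le_of_le hσ hcrit.le hA hM
  rwa [hcrit, div_self four_ne_zero, Real.rpow_one, add_sub_cancel_right] at hle

-- Split at the frequency `√A`, where `A = ∫|Δu|²`: with `γ = g/√A` and `g = ∫|∇u|²`, the low part
-- satisfies `∫|ΔL|² ≤ γA` and the high part has mass at most `γ`.
theorem pPow_le_gradSq_div (h : GagliardoNirenberg N σ C) (hσ : 0 < σ) (hcrit : (N : ℝ) * σ = 4)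
    {V : H2 N} (hV : 0 < V.lapSq) :
    V.pPow σ ≤ 2 ^ (2 * σ + 1) * C *
      (V.gradSq / √V.lapSq * V.massSq ^ σ + (V.gradSq / √V.lapSq) ^ σ) * V.lapSq := by
  have hA : 0 < √V.lapSq := Real.sqrt_pos.2 hV
  have hlow : (V.lowFreq √V.lapSq).lapSq ≤ V.gradSq / √V.lapSq * V.lapSq :=
    (V.lapSq_lowFreq_le _ hA.le).trans_eq <| by
      nth_rw 3 [← Real.mul_self_sqrt hV.le]
      field_simp
  have hhigh : (V.highFreq √V.lapSq).massSq ≤ V.gradSq / √V.lapSq :=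
    (le_div_iff₀' hA).2 (V.mul_massSq_highFreq_le _)
  calc V.pPow σ
      ≤ 2 ^ (2 * σ + 1) * ((V.lowFreq √V.lapSq).pPow σ + (V.highFreq √V.lapSq).pPow σ) :=
        h.pPow_le_add hσ hcrit.le (V.ae_eq_lowFreq_add_highFreq _)
    _ ≤ 2 ^ (2 * σ + 1) * (C * (V.gradSq / √V.lapSq * V.lapSq) * V.massSq ^ σ +
          C * V.lapSq * (V.gradSq / √V.lapSq) ^ σ) := by
        gcongr
        · exact h.pPow_le_of_le_of_eq hσ hcrit hlow (V.massSq_lowFreq_le _)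
        · exact h.pPow_le_of_le_of_eq hσ hcrit (V.lapSq_highFreq_le _) hhigh
    _ = _ := by ring

end GagliardoNirenberg

namespace H2

variable {N : ℕ} {σ a K m : ℝ} {V : H2 N}

theorem gradSq_sq_le_of_energy_ge [NeZero N] (hcrit : (N : ℝ) * σ = 4) (hV : 0 < V.massSq)
    (hK : 0 < K) (h : ∀ W : H2 N, W.massSq = V.massSq → -K ≤ W.energy σ) :
    V.gradSq ^ 2 ≤ K * (V.lapSq - 1 / (σ + 1) * V.pPow σ) := by
  have hg := V.gradSq_pos hV
  have hl : 0 < √(K / V.gradSq) := by positivity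
  have hl2 : √(K / V.gradSq) ^ 2 = K / V.gradSq := Real.sq_sqrt (by positivity)
  have hl4 : √(K / V.gradSq) ^ 4 = (K / V.gradSq) ^ 2 := by
    rw [pow_mul _ 2 2, hl2]
  have hl4' : √(K / V.gradSq) ^ (4 : ℝ) = (K / V.gradSq) ^ 2 := by rw [← hl4]; norm_cast
  have hE := h (V.concentrate hl) (V.massSq_concentrate hl)
  rw [energy, lapSq_concentrate, gradSq_concentrate, pPow_concentrate, hcrit, hl4, hl4', hl2,
    div_mul_cancel₀ _ hg.ne'] at hE
  have hK' : K ≤ (K / V.gradSq) ^ 2 * (V.lapSq - 1 / (σ + 1) * V.pPow σ) := by linarith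
  rw [div_pow, div_mul_eq_mul_div, le_div_iff₀ (pow_pos hg 2), sq K, mul_assoc] at hK'
  exact le_of_mul_le_mul_left hK' hK

theorem exists_pPow_le_one_sub_mul_lapSq [NeZero N] (hσ : 0 < σ) (hcrit : (N : ℝ) * σ = 4)
    (hm : 0 < m) (hK : 0 < K) (h : ∀ W : H2 N, W.massSq = m → -K ≤ W.energy σ) :
    ∃ a > 0, ∀ V : H2 N, V.massSq = m → 1 / (σ + 1) * V.pPow σ ≤ (1 - a) * V.lapSq := by
  obtain ⟨C, hC⟩ := EnergyBddBelow.exists_gagliardoNirenberg hσ hm ⟨-K, h⟩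
  set D := 1 / (σ + 1) * (2 ^ (2 * σ + 1) * C)
  have hlim : Tendsto (fun γ : ℝ => D * (γ * m ^ σ + γ ^ σ)) (𝓝 0) (𝓝 0) := by
    have hcont : Continuous fun γ : ℝ => D * (γ * m ^ σ + γ ^ σ) := by
      fun_prop (disch := exact hσ.le)
    simpa [Real.zero_rpow hσ.ne'] using hcont.tendsto 0
  obtain ⟨γ₀, hγ₀, hsmall⟩ :=
    Metric.eventually_nhds_iff.1 (hlim.eventually_lt_const (one_half_pos (α := ℝ)))
  refine ⟨min (1 / 2) (γ₀ ^ 2 / K), by positivity, fun V hV => ?_⟩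
  subst hV
  have hA := V.lapSq_pos hm
  have hg := V.gradSq_pos hm
  rcases lt_or_ge (V.gradSq / √V.lapSq) γ₀ with hγ | hγ
  · have hD := hsmall (y := V.gradSq / √V.lapSq) (by
      rwa [Real.dist_0_eq_abs, abs_of_pos (by positivity)])
    calc 1 / (σ + 1) * V.pPow σ
        ≤ 1 / (σ + 1) * (2 ^ (2 * σ + 1) * C * (V.gradSq / √V.lapSq * V.massSq ^ σ +
            (V.gradSq / √V.lapSq) ^ σ) * V.lapSq) := by
          gcongr
          exact hC.pPow_le_gradSq_div hσ hcrit hA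
      _ = D * (V.gradSq / √V.lapSq * V.massSq ^ σ + (V.gradSq / √V.lapSq) ^ σ) * V.lapSq := by ring
      _ ≤ (1 - min (1 / 2) (γ₀ ^ 2 / K)) * V.lapSq := by
          gcongr
          linarith [min_le_left (1 / 2) (γ₀ ^ 2 / K)]
  · rw [le_div_iff₀ (by positivity)] at hγ
    have hγA : γ₀ ^ 2 / K * V.lapSq ≤ V.lapSq - 1 / (σ + 1) * V.pPow σ := by
      rw [div_mul_eq_mul_div, div_le_iff₀' hK]
      calc γ₀ ^ 2 * V.lapSq = (γ₀ * √V.lapSq) ^ 2 := by rw [mul_pow, Real.sq_sqrt hA.le]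
        _ ≤ V.gradSq ^ 2 := by gcongr
        _ ≤ _ := gradSq_sq_le_of_energy_ge hcrit hm hK h
    have hmin := mul_le_mul_of_nonneg_right (min_le_right (1 / 2) (γ₀ ^ 2 / K)) hA.le
    linarith

theorem eventually_energyBddBelow (hσ : 0 < σ) (hm : 0 < m) (ha : 0 < a)
    (h : ∀ V : H2 N, V.massSq = m → 1 / (σ + 1) * V.pPow σ ≤ (1 - a) * V.lapSq) :
    ∀ᶠ t in 𝓝 m, EnergyBddBelow N σ t := by
  have hlim : Tendsto (fun t : ℝ => (1 - a / 2) * (m / t) ^ σ) (𝓝 m) (𝓝 (1 - a / 2)) := by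
    have hdiv : Tendsto (fun t : ℝ => m / t) (𝓝 m) (𝓝 1) :=
      div_self hm.ne' ▸ tendsto_const_nhds.div tendsto_id hm.ne'
    simpa using (hdiv.rpow_const (.inr hσ.le)).const_mul (1 - a / 2)
  filter_upwards [hlim.eventually_const_lt (show 1 - a < 1 - a / 2 by linarith),
    lt_mem_nhds hm] with t hta ht
  refine .of_pPow_le (half_pos ha) (K := 0) fun V hV => ?_
  subst hV
  have hs : 0 < m / V.massSq := div_pos hm ht
  have hA := V.lapSq_nonneg
  have hscaled := h _ (massSq_withMass ht hm.le)
  rw [withMass, pPow_sqrtSmul _ _ hs.le, lapSq_sqrtSmul _ hs.le, Real.rpow_add_one hs.ne']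
    at hscaled
  refine le_of_mul_le_mul_left ?_ (mul_pos hs (Real.rpow_pos_of_pos hs σ))
  calc m / V.massSq * (m / V.massSq) ^ σ * (1 / (σ + 1) * V.pPow σ)
      = 1 / (σ + 1) * ((m / V.massSq) ^ σ * (m / V.massSq) * V.pPow σ) := by ring
    _ ≤ (1 - a) * (m / V.massSq * V.lapSq) := hscaled
    _ ≤ (1 - a / 2) * (m / V.massSq) ^ σ * (m / V.massSq * V.lapSq) := by gcongr
    _ = _ := by ring

theorem IsMinimizer.exists_gt_energyBddBelow [NeZero N] {U : H2 N} (hU : U.IsMinimizer σ)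
    (hσ : 0 < σ) (hcrit : (N : ℝ) * σ ≤ 4) : ∃ b > U.massSq, EnergyBddBelow N σ b := by
  rcases hcrit.lt_or_eq with hsub | hcrit
  · obtain ⟨C, hC⟩ := hU.energyBddBelow.exists_gagliardoNirenberg hσ hU.massSq_pos
    exact ⟨U.massSq + 1, by linarith, hC.energyBddBelow hσ hsub (by linarith [hU.massSq_pos])⟩
  · have hK : 0 < -U.energy σ := by linarith [hU.energy_le_neg_massSq hσ, hU.massSq_pos]
    obtain ⟨a, ha, hgap⟩ := exists_pPow_le_one_sub_mul_lapSq hσ hcrit hU.massSq_pos hK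
      (by simpa using hU.energy_le)
    have hnear := eventually_energyBddBelow hσ hU.massSq_pos ha hgap
    obtain ⟨b, hb, hbm⟩ := ((hnear.filter_mono nhdsWithin_le_nhds).and
      (self_mem_nhdsWithin (s := Set.Ioi U.massSq))).exists
    exact ⟨b, hbm, hb⟩

end H2

theorem exists_hasDerivWithinAt_of_concaveOn_of_le {f : ℝ → ℝ} {a b c x : ℝ}
    (hf : ConcaveOn ℝ (Set.Ioo a b) f) (hx : x ∈ Set.Ioo a b)
    (hle : ∀ t ∈ Set.Ioo a b, f t ≤ f x + c * (t - x)) :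
    ∃ l r, HasDerivWithinAt f l (Set.Iio x) x ∧ HasDerivWithinAt f r (Set.Ioi x) x ∧
      c ≤ l ∧ r ≤ c := by
  have hint : x ∈ interior (Set.Ioo a b) := by rwa [interior_Ioo]
  have hl := (hf.neg.hasDerivWithinAt_leftDeriv_of_mem_interior hint).neg
  have hr := (hf.neg.hasDerivWithinAt_rightDeriv_of_mem_interior hint).neg
  rw [neg_neg] at hl hr
  refine ⟨_, _, hl, hr, ?_, ?_⟩
  · rw [hasDerivWithinAt_iff_tendsto_slope' (by simp)] at hl
    refine ge_of_tendsto hl ?_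
    filter_upwards [Ioo_mem_nhdsLT hx.1] with t ht
    rw [slope_def_field, le_div_iff_of_neg (sub_neg.2 ht.2)]
    linarith [hle t ⟨ht.1, ht.2.trans hx.2⟩]
  · rw [hasDerivWithinAt_iff_tendsto_slope' (by simp)] at hr
    refine le_of_tendsto hr ?_
    filter_upwards [Ioo_mem_nhdsGT hx.2] with t ht
    rw [slope_def_field, div_le_iff₀ (sub_pos.2 ht.1)]
    linarith [hle t ⟨hx.1.trans ht.1, ht.2⟩]

section EminE

variable {N : ℕ} {σ b t : ℝ}

open H2

theorem EminE_le_energy (σ : ℝ) (V : H2 N) : EminE N σ V.massSq ≤ V.energy σ :=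
  iInf₂_le (f := fun (W : H2 N) (_ : W.massSq = V.massSq) => (W.energy σ : EReal)) V rfl

theorem EnergyBddBelow.coe_toReal_EminE [NeZero N] (h : EnergyBddBelow N σ t) (hσ : 0 < σ)
    (ht : 0 < t) : ((EminE N σ t).toReal : EReal) = EminE N σ t := by
  obtain ⟨V, rfl, -⟩ := exists_massSq_eq_energy_le (N := N) hσ ht one_pos
  obtain ⟨K, hK⟩ := h
  have hle : (K : EReal) ≤ EminE N σ V.massSq :=
    le_iInf₂ fun W hW => EReal.coe_le_coe_iff.2 (hK W hW)
  exact EReal.coe_toReal ((EminE_le_energy σ V).trans_lt (EReal.coe_lt_top _)).ne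
    ((EReal.bot_lt_coe _).trans_le hle).ne'

theorem EnergyBddBelow.toReal_EminE_le [NeZero N] (hσ : 0 < σ) {V : H2 N} (hV : 0 < V.massSq)
    (h : EnergyBddBelow N σ V.massSq) : (EminE N σ V.massSq).toReal ≤ V.energy σ := by
  rw [← EReal.coe_le_coe_iff, h.coe_toReal_EminE hσ hV]
  exact EminE_le_energy σ V

theorem EnergyBddBelow.le_toReal_EminE [NeZero N] (h : EnergyBddBelow N σ t) (hσ : 0 < σ)
    (ht : 0 < t) (hb : ∀ V : H2 N, V.massSq = t → b ≤ V.energy σ) :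
    b ≤ (EminE N σ t).toReal := by
  rw [← EReal.coe_le_coe_iff, h.coe_toReal_EminE hσ ht]
  exact le_iInf₂ fun V hV => EReal.coe_le_coe_iff.2 (hb V hV)

theorem EnergyBddBelow.toReal_EminE_le_tangent [NeZero N] (h : EnergyBddBelow N σ t) (hσ : 0 < σ)
    (ht : 0 < t) {V : H2 N} (hV : 0 < V.massSq) :
    (EminE N σ t).toReal ≤ V.energy σ - V.multiplier σ * (t - V.massSq) := by
  have hmass := massSq_withMass hV ht.le
  rw [← hmass] at h
  have hle := h.toReal_EminE_le hσ (by rwa [hmass])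
  rw [hmass] at hle
  exact hle.trans (energy_withMass_le hV hσ ht.le)

-- The energy at mass `z` lies above the values at `x` and `y` of an affine function of the mass.
theorem EnergyBddBelow.concaveOn_toReal_EminE [NeZero N] (h : EnergyBddBelow N σ b) (hσ : 0 < σ) :
    ConcaveOn ℝ (Set.Ioo 0 b) fun t => (EminE N σ t).toReal := by
  have hbdd : ∀ t ∈ Set.Ioo 0 b, EnergyBddBelow N σ t := fun t ht => h.of_le hσ ht.1 ht.2.le
  refine ⟨convex_Ioo _ _, fun x hx y hy α β hα hβ hαβ => ?_⟩
  have hz : α • x + β • y ∈ Set.Ioo 0 b := convex_Ioo _ _ hx hy hα hβ hαβ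
  refine (hbdd _ hz).le_toReal_EminE hσ hz.1 fun V hV => ?_
  have hVpos : 0 < V.massSq := hV ▸ hz.1
  have hαx := mul_le_mul_of_nonneg_left ((hbdd x hx).toReal_EminE_le_tangent hσ hx.1 hVpos) hα
  have hβy := mul_le_mul_of_nonneg_left ((hbdd y hy).toReal_EminE_le_tangent hσ hy.1 hVpos) hβ
  rw [hV] at hαx hβy
  refine (add_le_add hαx hβy).trans_eq ?_
  obtain rfl : β = 1 - α := by linarith
  simp only [smul_eq_mul]
  ring

end EminE

namespace H2.IsMinimizer

variable {N : ℕ} {σ t : ℝ} {U : H2 N}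

theorem toReal_EminE (hU : U.IsMinimizer σ) : (EminE N σ U.massSq).toReal = U.energy σ := by
  have hE : EminE N σ U.massSq = U.energy σ :=
    le_antisymm (EminE_le_energy σ U) (le_iInf₂ fun V hV => EReal.coe_le_coe_iff.2 (hU.2 V hV))
  rw [hE, EReal.toReal_coe]

theorem exists_hasDerivWithinAt_EminE [NeZero N] (hU : U.IsMinimizer σ) (hσ : 0 < σ)
    (hcrit : (N : ℝ) * σ ≤ 4) :
    ∃ dl dr,
      HasDerivWithinAt (fun t => (EminE N σ t).toReal) dl (Set.Iio U.massSq) U.massSq ∧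
      HasDerivWithinAt (fun t => (EminE N σ t).toReal) dr (Set.Ioi U.massSq) U.massSq ∧
      -U.multiplier σ ≤ dl ∧ dr ≤ -U.multiplier σ := by
  obtain ⟨b, hb, hbdd⟩ := hU.exists_gt_energyBddBelow hσ hcrit
  refine exists_hasDerivWithinAt_of_concaveOn_of_le (hbdd.concaveOn_toReal_EminE hσ)
    ⟨hU.massSq_pos, hb⟩ fun t ht => ?_
  rw [hU.toReal_EminE, neg_mul, ← sub_eq_add_neg]
  exact (hbdd.of_le hσ ht.1 ht.2.le).toReal_EminE_le_tangent hσ ht.1 hU.massSq_pos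

theorem EminE_lt_neg [NeZero N] (hU : U.IsMinimizer σ) (hσ : 0 < σ) (hcrit : (N : ℝ) * σ ≤ 4)
    (ht : U.massSq < t) : EminE N σ t < ((-t : ℝ) : EReal) := by
  have hM := hU.massSq_pos
  have hle := EminE_le_energy σ (U.withMass t)
  rw [massSq_withMass hM (hM.trans ht).le] at hle
  refine hle.trans_lt (EReal.coe_lt_coe_iff.2 ?_)
  have htangent := energy_withMass_le hM hσ (hM.trans ht).le
  have hslope := mul_lt_mul_of_pos_right (hU.one_lt_multiplier hσ hcrit) (sub_pos.2 ht)
  linarith [hU.energy_le_neg_massSq hσ]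

end H2.IsMinimizer

section NormRpow

variable {α E : Type*} [MeasurableSpace α] {μ : Measure α} {p : ℝ} {f g : α → E}

theorem integrable_norm_rpow_mul_norm [NormedAddCommGroup E] (hp : 1 < p)
    (hf : MemLp f (ENNReal.ofReal p) μ) (hg : MemLp g (ENNReal.ofReal p) μ) :
    Integrable (fun x => ‖f x‖ ^ (p - 1) * ‖g x‖) μ := by
  have hp0 : 0 < p := one_pos.trans hp
  have hsum := (hf.norm.add hg.norm).integrable_norm_rpow (by simpa using hp0)
    ENNReal.ofReal_ne_top
  refine hsum.mono' ((hf.1.norm.aemeasurable.pow_const _).mul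
    hg.1.norm.aemeasurable).aestronglyMeasurable (ae_of_all _ fun x => ?_)
  simp only [ENNReal.toReal_ofReal hp0.le, Pi.add_apply]
  rw [Real.norm_of_nonneg (by positivity), Real.norm_of_nonneg (by positivity)]
  calc ‖f x‖ ^ (p - 1) * ‖g x‖ ≤ (‖f x‖ + ‖g x‖) ^ (p - 1) * (‖f x‖ + ‖g x‖) := by
        have hf := norm_nonneg (f x)
        have hg := norm_nonneg (g x)
        gcongr <;> linarith
    _ = (‖f x‖ + ‖g x‖) ^ p := by
        rw [← Real.rpow_add_one' (by positivity) (by linarith), sub_add_cancel]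

variable [NormedAddCommGroup E] [InnerProductSpace ℝ E]

theorem hasDerivAt_norm_add_smul_rpow (hp : 1 < p) (a b : E) (t : ℝ) :
    HasDerivAt (fun t : ℝ => ‖a + t • b‖ ^ p)
      (p * ‖a + t • b‖ ^ (p - 2) * inner ℝ (a + t • b) b) t := by
  have hline : HasDerivAt (fun t : ℝ => a + t • b) b t := by
    simpa using ((hasDerivAt_id t).smul_const b).const_add a
  exact (hasFDerivAt_norm_rpow (a + t • b) hp).comp_hasDerivAt t hline

theorem norm_mul_norm_rpow_mul_inner_le (hp : 1 < p) (a b : E) :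
    ‖p * ‖a‖ ^ (p - 2) * inner ℝ a b‖ ≤ p * (‖a‖ ^ (p - 1) * ‖b‖) := by
  have hnonneg : 0 ≤ p * ‖a‖ ^ (p - 2) := mul_nonneg (one_pos.trans hp).le (by positivity)
  have hpow : ‖a‖ ^ (p - 1) = ‖a‖ ^ (p - 2) * ‖a‖ := by
    rw [← Real.rpow_add_one' (norm_nonneg _) (by linarith)]
    ring_nf
  rw [norm_mul, Real.norm_of_nonneg hnonneg, hpow, mul_assoc (‖a‖ ^ (p - 2)), ← mul_assoc p]
  exact mul_le_mul_of_nonneg_left (norm_inner_le_norm a b) hnonneg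

theorem hasDerivAt_integral_norm_add_smul_rpow (hp : 1 < p)
    (hf : MemLp f (ENNReal.ofReal p) μ) (hg : MemLp g (ENNReal.ofReal p) μ) :
    HasDerivAt (fun t : ℝ => ∫ x, ‖f x + t • g x‖ ^ p ∂μ)
      (p * ∫ x, ‖f x‖ ^ (p - 2) * inner ℝ (f x) (g x) ∂μ) 0 := by
  have hp0 : 0 < p := one_pos.trans hp
  have hmeas (t : ℝ) : AEStronglyMeasurable (fun x => f x + t • g x) μ :=
    hf.1.add (hg.1.const_smul t)
  have hrpow (t q : ℝ) : AEStronglyMeasurable (fun x => ‖f x + t • g x‖ ^ q) μ :=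
    ((hmeas t).norm.aemeasurable.pow_const q).aestronglyMeasurable
  have hint : Integrable (fun x => ‖f x + (0 : ℝ) • g x‖ ^ p) μ := by
    simpa [ENNReal.toReal_ofReal hp0.le] using
      hf.integrable_norm_rpow (by simpa using hp0) ENNReal.ofReal_ne_top
  have hbound : Integrable (fun x => p * (‖‖f x‖ + ‖g x‖‖ ^ (p - 1) * ‖‖g x‖‖)) μ :=
    (integrable_norm_rpow_mul_norm hp (hf.norm.add hg.norm) hg.norm).const_mul p
  have hderiv := (hasDerivAt_integral_of_dominated_loc_of_deriv_le
    (F' := fun t x => p * ‖f x + t • g x‖ ^ (p - 2) * inner ℝ (f x + t • g x) (g x))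
    (Metric.ball_mem_nhds (0 : ℝ) one_pos) (.of_forall fun t => hrpow t p) hint
    (((hrpow 0 _).const_mul p).mul ((hmeas 0).inner hg.1)) (ae_of_all _ fun x t ht => ?_) hbound
    (ae_of_all _ fun x t _ => hasDerivAt_norm_add_smul_rpow hp (f x) (g x) t)).2
  · simpa only [zero_smul, add_zero, mul_assoc, integral_const_mul] using hderiv
  · refine (norm_mul_norm_rpow_mul_inner_le hp _ _).trans ?_
    have ht : ‖t‖ ≤ 1 := (mem_ball_zero_iff.1 ht).le
    rw [norm_norm, Real.norm_of_nonneg (by positivity : 0 ≤ ‖f x‖ + ‖g x‖)]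
    have htg : ‖t • g x‖ ≤ ‖g x‖ := by
      rw [norm_smul]
      exact mul_le_of_le_one_left (norm_nonneg _) ht
    gcongr
    exact norm_add_le_of_le le_rfl htg

theorem hasDerivAt_integral_norm_add_smul_sq (hf : MemLp f 2 μ) (hg : MemLp g 2 μ) :
    HasDerivAt (fun t : ℝ => ∫ x, ‖f x + t • g x‖ ^ 2 ∂μ) (2 * ∫ x, inner ℝ (f x) (g x) ∂μ) 0 := by
  have hderiv := hasDerivAt_integral_norm_add_smul_rpow (p := 2) (f := f) (g := g) (μ := μ)
    one_lt_two (by simpa using hf) (by simpa using hg)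
  simpa using hderiv

theorem integrable_norm_rpow_mul_mul {f g : α → ℂ} {σ : ℝ} (hσ : 0 < σ)
    (hf : MemLp f (ENNReal.ofReal (2 * σ + 2)) μ) (hg : MemLp g (ENNReal.ofReal (2 * σ + 2)) μ) :
    Integrable (fun x => ((‖f x‖ ^ (2 * σ) : ℝ) : ℂ) * f x * g x) μ := by
  refine (integrable_norm_rpow_mul_norm (by linarith) hf hg).mono' ?_ (ae_of_all _ fun x => ?_)
  · have hpow := (hf.1.norm.aemeasurable.pow_const (2 * σ)).complex_ofReal
    exact (hpow.aestronglyMeasurable.mul hf.1).mul hg.1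
  · rw [norm_mul, norm_mul, Complex.norm_real, Real.norm_of_nonneg (by positivity),
      ← Real.rpow_add_one' (norm_nonneg _) (by linarith)]
    exact le_of_eq (by ring_nf)

end NormRpow

namespace H2

variable {N : ℕ} {σ : ℝ} {U V : H2 N}

section AddSMul

@[ext]
theorem ext (hu : U.u = V.u) (hgrad : U.grad = V.grad) (hlapl : U.lapl = V.lapl) : U = V := by
  cases U
  cases V
  congr

theorem add_zero_smul (U V : H2 N) : U + (0 : ℂ) • V = U := by
  ext <;> simp [add_u, smul_u, add_grad, smul_grad, add_lapl, smul_lapl]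

theorem hasDerivAt_massSq_add_smul (U V : H2 N) :
    HasDerivAt (fun t : ℝ => (U + (t : ℂ) • V).massSq) (2 * ∫ x, inner ℝ (U.u x) (V.u x)) 0 :=
  hasDerivAt_integral_norm_add_smul_sq U.u_mem V.u_mem

theorem hasDerivAt_lapSq_add_smul (U V : H2 N) :
    HasDerivAt (fun t : ℝ => (U + (t : ℂ) • V).lapSq) (2 * ∫ x, inner ℝ (U.lapl x) (V.lapl x)) 0 :=
  hasDerivAt_integral_norm_add_smul_sq U.lapl_mem V.lapl_mem

theorem hasDerivAt_gradSq_add_smul (U V : H2 N) :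
    HasDerivAt (fun t : ℝ => (U + (t : ℂ) • V).gradSq)
      (2 * ∑ i, ∫ x, inner ℝ (U.grad i x) (V.grad i x)) 0 := by
  rw [Finset.mul_sum]
  exact HasDerivAt.fun_sum fun i _ =>
    hasDerivAt_integral_norm_add_smul_sq (U.grad_mem i) (V.grad_mem i)

theorem hasDerivAt_pPow_add_smul (hσ : 0 < σ) (hU : MemLp U.u (ENNReal.ofReal (2 * σ + 2)))
    (hV : MemLp V.u (ENNReal.ofReal (2 * σ + 2))) :
    HasDerivAt (fun t : ℝ => (U + (t : ℂ) • V).pPow σ)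
      ((2 * σ + 2) * ∫ x, ‖U.u x‖ ^ (2 * σ) * inner ℝ (U.u x) (V.u x)) 0 := by
  have hderiv := hasDerivAt_integral_norm_add_smul_rpow (by linarith) hU hV
  rwa [add_sub_cancel_right] at hderiv

end AddSMul

/-- The left-hand side of the weak form of `Δ²u + 2Δu + (1 + c)u - |u|^{2σ}u = 0`, tested
against `φ`. -/
def residual (σ c : ℝ) (U : H2 N) (φ : Esp N → ℂ) : ℂ :=
  (∫ x, U.lapl x * lapC φ x) + 2 * (∫ x, U.lapl x * φ x) +
    ((1 + c : ℝ) : ℂ) * (∫ x, U.u x * φ x) -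
    (∫ x, ((‖U.u x‖ ^ (2 * σ) : ℝ) : ℂ) * U.u x * φ x)

theorem residual_const_mul (σ c : ℝ) (U : H2 N) (a : ℂ) (φ : Esp N → ℂ) :
    U.residual σ c (fun x => a * φ x) = a * U.residual σ c φ := by
  simp only [residual, lapC_const_mul, mul_left_comm _ a, integral_const_mul]
  ring

namespace IsMinimizer

/- The tangent-line bound at `U + tV` shows that `t = 0` minimizes
`E(U + tV) - λ(U + tV) (M(U) - M(U + tV))`. The derivative of `λ` does not matter, as it is
multiplied by `M(U) - M(U) = 0`. -/
theorem integral_inner_eq_zero [NeZero N] (hU : U.IsMinimizer σ) (hσ : 0 < σ)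
    (hcrit : (N : ℝ) * σ ≤ 4) (V : H2 N) :
    (∫ x, inner ℝ (U.lapl x) (V.lapl x)) - 2 * (∑ i, ∫ x, inner ℝ (U.grad i x) (V.grad i x)) +
      U.multiplier σ * (∫ x, inner ℝ (U.u x) (V.u x)) -
      ∫ x, ‖U.u x‖ ^ (2 * σ) * inner ℝ (U.u x) (V.u x) = 0 := by
  obtain ⟨C, hC⟩ := hU.energyBddBelow.exists_gagliardoNirenberg hσ hU.massSq_pos
  have hM := U.hasDerivAt_massSq_add_smul V
  have hL := U.hasDerivAt_lapSq_add_smul V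
  have hG := (U.hasDerivAt_gradSq_add_smul V).const_mul 2
  have hP := hasDerivAt_pPow_add_smul hσ (hC.memLp hσ hcrit U) (hC.memLp hσ hcrit V)
  have hpath : U + ((0 : ℝ) : ℂ) • V = U := by rw [Complex.ofReal_zero, add_zero_smul]
  have hE : HasDerivAt (fun t : ℝ => (U + (t : ℂ) • V).energy σ) _ 0 :=
    (hL.sub hG).sub (hP.const_mul (1 / (σ + 1)))
  have hlam : HasDerivAt (fun t : ℝ => (U + (t : ℂ) • V).multiplier σ) _ 0 :=
    ((hP.add hG).sub hL).div hM (hpath.symm ▸ hU.massSq_pos.ne')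
  have hmin : IsLocalMin (fun t : ℝ => (U + (t : ℂ) • V).energy σ -
      (U + (t : ℂ) • V).multiplier σ * (U.massSq - (U + (t : ℂ) • V).massSq)) 0 := by
    have hpos : ∀ᶠ t : ℝ in 𝓝 0, 0 < (U + (t : ℂ) • V).massSq :=
      hM.continuousAt.eventually_const_lt (by simpa only [hpath] using hU.massSq_pos)
    filter_upwards [hpos] with t ht
    rw [hpath, sub_self, mul_zero, sub_zero]
    exact (hU.energy_le _ (massSq_withMass ht hU.massSq_pos.le)).trans
      (energy_withMass_le ht hσ hU.massSq_pos.le)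
  have hstat := hmin.hasDerivAt_eq_zero (hE.sub (hlam.mul (hM.const_sub U.massSq)))
  simp only [hpath, sub_self, mul_zero, zero_add] at hstat
  field_simp at hstat
  linarith

theorem re_residual_eq_zero [NeZero N] (hU : U.IsMinimizer σ) (hσ : 0 < σ)
    (hcrit : (N : ℝ) * σ ≤ 4) {φ : Esp N → ℂ} (hφ : TestFun φ) :
    (U.residual σ (U.multiplier σ - 1) φ).re = 0 := by
  obtain ⟨C, hC⟩ := hU.energyBddBelow.exists_gagliardoNirenberg hσ hU.massSq_pos
  have hre {f g : Esp N → ℂ} (hf : MemLp f 2) (hg : MemLp g 2) :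
      ∫ x, (f x * g x).re = (∫ x, f x * g x).re := integral_re (hf.integrable_mul hg)
  have hpow : Integrable fun x => ((‖U.u x‖ ^ (2 * σ) : ℝ) : ℂ) * U.u x * φ x :=
    integrable_norm_rpow_mul_mul hσ (hC.memLp hσ hcrit U) (hφ.memLp _)
  have hpow_re : ∫ x, (((‖U.u x‖ ^ (2 * σ) : ℝ) : ℂ) * U.u x * φ x).re =
      (∫ x, ((‖U.u x‖ ^ (2 * σ) : ℝ) : ℂ) * U.u x * φ x).re := integral_re hpow
  have hinner (z w : ℂ) : inner ℝ z (starRingEnd ℂ w) = (z * w).re := by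
    rw [Complex.inner, ← map_mul, Complex.conj_re, mul_comm]
  have hEL := hU.integral_inner_eq_zero hσ hcrit (ofTestFun hφ.conj)
  simp only [ofTestFun, pderivC_conj, lapC_conj, hinner, ← Complex.re_ofReal_mul,
    ← mul_assoc] at hEL
  simp only [hre U.lapl_mem (hφ.lapC.memLp 2), hre U.u_mem (hφ.memLp 2), hpow_re,
    hre (U.grad_mem _) ((hφ.pderivC _).memLp 2), ← Complex.re_sum,
    U.sum_integral_grad_mul_pderivC hφ] at hEL
  rw [← hEL, residual, add_sub_cancel]
  simp

theorem solvesSW [NeZero N] (hU : U.IsMinimizer σ) (hσ : 0 < σ) (hcrit : (N : ℝ) * σ ≤ 4) :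
    SolvesSW σ (U.multiplier σ - 1) U := by
  intro φ hφ
  change U.residual σ (U.multiplier σ - 1) φ = 0
  have hre := hU.re_residual_eq_zero hσ hcrit hφ
  have him := hU.re_residual_eq_zero hσ hcrit (hφ.const_mul Complex.I)
  rw [residual_const_mul, Complex.I_mul_re, neg_eq_zero] at him
  exact Complex.ext hre him

end IsMinimizer

end H2

theorem SolvesSW.unique {N : ℕ} {σ c c' : ℝ} {U : H2 N} (hU : 0 < U.massSq) (h : SolvesSW σ c U)
    (h' : SolvesSW σ c' U) : c = c' := by
  by_contra hne
  have hzero : U.u =ᵐ[volume] 0 := by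
    refine ae_eq_of_integral_mul_schwartzMap_eq (U.u_mem.locallyIntegrable (by norm_num))
      locallyIntegrable_zero fun ψ hψ => ?_
    have heq := (h ψ ⟨ψ.smooth _, hψ⟩).trans (h' ψ ⟨ψ.smooth _, hψ⟩).symm
    have hmul : ((c - c' : ℝ) : ℂ) * ∫ x, U.u x * ψ x = 0 := by
      push_cast at heq ⊢
      linear_combination heq
    simpa [sub_eq_zero, hne] using hmul
  refine hU.ne' (integral_eq_zero_of_ae ?_)
  filter_upwards [hzero] with x hx
  simp [hx]

/-- Any minimizer of `E` at fixed mass `m` satisfies the Euler–Lagrange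
equation `Δ²u + 2Δu + (1+c)u - |u|^{2σ}u = 0` for some `c > 0` with
`1 + c ∈ [-E'_{min,ℓ}(m), -E'_{min,r}(m)]`; the multipliers are strictly increasing in the
mass; and if `m₀ = sup{m : E_min(m) = -m} > 0` then there is no minimizer for
`m ∈ (0, m₀)`. -/
theorem stmt10 (N : ℕ) (σ : ℝ) (hN : 1 ≤ N) (hσ : 0 < σ) (hcrit : (N : ℝ) * σ ≤ 4)
    (m : ℝ) (hm : 0 < m) (U : H2 N) (hUm : U.massSq = m)
    (hmin : ∀ V : H2 N, V.massSq = m → U.energy σ ≤ V.energy σ) :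
    (∃ c : ℝ, 0 < c ∧ SolvesSW σ c U ∧
      ∃ dl dr : ℝ,
        HasDerivWithinAt (fun t : ℝ => (EminE N σ t).toReal) dl (Set.Iio m) m ∧
        HasDerivWithinAt (fun t : ℝ => (EminE N σ t).toReal) dr (Set.Ioi m) m ∧
        -dl ≤ 1 + c ∧ 1 + c ≤ -dr) ∧
    (∀ (m₁ m₂ : ℝ) (U₁ U₂ : H2 N) (c₁ c₂ : ℝ), 0 < m₁ → m₁ < m₂ →
      U₁.massSq = m₁ → (∀ V : H2 N, V.massSq = m₁ → U₁.energy σ ≤ V.energy σ) →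
      U₂.massSq = m₂ → (∀ V : H2 N, V.massSq = m₂ → U₂.energy σ ≤ V.energy σ) →
      0 < c₁ → SolvesSW σ c₁ U₁ → 0 < c₂ → SolvesSW σ c₂ U₂ → c₁ < c₂) ∧
    (0 < sSup {m' : ℝ | 0 < m' ∧ EminE N σ m' = ((-m' : ℝ) : EReal)} →
      ∀ m' : ℝ, 0 < m' → m' < sSup {m' : ℝ | 0 < m' ∧ EminE N σ m' = ((-m' : ℝ) : EReal)} →
        ¬ ∃ V : H2 N, V.massSq = m' ∧
          ∀ W : H2 N, W.massSq = m' → V.energy σ ≤ W.energy σ) := by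
  have : NeZero N := ⟨by omega⟩
  refine ⟨?_, ?_, ?_⟩
  · subst hUm
    have hU : U.IsMinimizer σ := ⟨hm, hmin⟩
    obtain ⟨dl, dr, hl, hr, hle_dl, hdr_le⟩ := hU.exists_hasDerivWithinAt_EminE hσ hcrit
    exact ⟨U.multiplier σ - 1, sub_pos.2 (hU.one_lt_multiplier hσ hcrit), hU.solvesSW hσ hcrit,
      dl, dr, hl, hr, by linarith, by linarith⟩
  · rintro _ _ U₁ U₂ c₁ c₂ hm₁ hlt rfl hmin₁ rfl hmin₂ - hc₁ - hc₂
    have hU₁ : U₁.IsMinimizer σ := ⟨hm₁, hmin₁⟩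
    have hU₂ : U₂.IsMinimizer σ := ⟨hm₁.trans hlt, hmin₂⟩
    rw [hc₁.unique hU₁.massSq_pos (hU₁.solvesSW hσ hcrit),
      hc₂.unique hU₂.massSq_pos (hU₂.solvesSW hσ hcrit)]
    exact sub_lt_sub_right (hU₁.multiplier_lt_multiplier hU₂ hσ hcrit hlt) 1
  · rintro hpos _ hm' hlt ⟨V, rfl, hV⟩
    have hne : {t : ℝ | 0 < t ∧ EminE N σ t = ((-t : ℝ) : EReal)}.Nonempty := by
      by_contra hempty
      rw [Set.not_nonempty_iff_eq_empty.1 hempty, Real.sSup_empty] at hpos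
      exact hpos.false
    obtain ⟨t, ht, hlt_t⟩ := exists_lt_of_lt_csSup hne hlt
    exact (H2.IsMinimizer.EminE_lt_neg ⟨hm', hV⟩ hσ hcrit hlt_t).ne ht.2

end
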